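/- arXiv:math/0207042 — 7 statements merged into one kernel-verified Lean document; each statement's English description precedes it below -/
import Mathlib

section
/- For every integer n ≥ 1, every integer k ≥ 0, and every tuple of elements a_0, a_1, …, a_{2k+1} of ℤ/n, the alternating sum Σ_{i=0}^{2k+1} (−1)^i · sgn_c(a_0, …, â_i, …, a_{2k+1}) equals 0, where â_i means that the entry a_i is omitted (so each summand is the cyclic sign of a (2k+1)-tuple). -/
/-!
Taking representatives in `[0, n)` turns the cyclic sign into a linear one: a tuple in cyclic
order becomes increasing after a cyclic rotation (`exists_rotation`), and rotations of an odd
number of entries are even. So for odd length the cyclic sign is the sign of the permutation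
sorting the representatives (`cycSign_eq_of_strictMono`), and it vanishes on tuples with a
repeated entry (`cycSign_eq_zero`).

Let `σ` sort the representatives of the whole tuple. Omitting the entry `σ r` leaves a tuple
sorted by a permutation of sign `sign σ * (-1) ^ (r + σ r)` (`exists_perm_succAbove`). Up to the
global factor `sign σ`, the sum is therefore the sum of `(-1) ^ r` over those `r` for which the
sorted tuple without its `r`-th entry has no repetition. If the sorted tuple is injective, this is
an alternating sum of an even number of ones. Otherwise two neighbours `r`, `r + 1` agree; only
these two indices can contribute, and they contribute with opposite signs
(`alternating_sum_indicator`).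
-/

/-- A tuple of elements of `ZMod n` is *in cyclic order* if it admits integer
representatives `y 0 < y 1 < ⋯ < y (m-1) < y 0 + n`. -/
def InCyclicOrder (n : ℕ) {m : ℕ} (x : Fin m → ZMod n) : Prop :=
  ∃ y : Fin m → ℤ, StrictMono y ∧ (∀ i, ((y i : ℤ) : ZMod n) = x i) ∧
    ∀ i j, y i < y j + (n : ℤ)

open Classical in
/-- The cyclic sign of a tuple of elements of `ZMod n`: it is `0` if the entries
are not pairwise distinct, and otherwise the sign of any permutation `σ` putting
the tuple in cyclic order (well defined for tuples of odd length). -/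
noncomputable def cycSign (n : ℕ) {m : ℕ} (x : Fin m → ZMod n) : ℤ :=
  if h : ∃ σ : Equiv.Perm (Fin m), InCyclicOrder n (x ∘ σ) then
    ((Equiv.Perm.sign h.choose : ℤˣ) : ℤ)
  else 0

/-- Translations are even permutations of a cyclic group of odd order. -/
lemma sign_addRight_odd (k : ℕ) (s : Fin (2 * k + 1)) :
    Equiv.Perm.sign (Equiv.addRight s) = 1 := by
  have h : (Equiv.addRight s) ^ (2 * k + 1) = 1 := by
    ext i
    have : (2 * k + 1) • s = 0 := by
      simpa using card_nsmul_eq_zero' (x := s)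
    simp [this]
  have h2 := congrArg Equiv.Perm.sign h
  rw [map_pow, map_one, pow_succ, pow_mul, Int.units_sq, one_pow, one_mul] at h2
  exact h2

lemma exists_rotation (n : ℕ) (hn : 1 ≤ n) (k : ℕ) (x : Fin (2 * k + 1) → ZMod n)
    (hx : InCyclicOrder n x) :
    ∃ c : Equiv.Perm (Fin (2 * k + 1)), Equiv.Perm.sign c = 1 ∧
      StrictMono fun i => (x (c i)).val := by
  have : NeZero n := ⟨by lia⟩
  obtain ⟨y, hy, hyx, hyn⟩ := hx
  -- `E` is the only multiple of `n` that can separate the representatives `y i`.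
  obtain ⟨E, hE, h0, h0'⟩ : ∃ E : ℤ, (n : ℤ) ∣ E ∧ E - n ≤ y 0 ∧ y 0 < E := by
    refine ⟨(y 0 / n + 1) * n, Dvd.intro_left _ rfl, ?_, ?_⟩
    · have := Int.ediv_mul_le (y 0) (b := n) (by lia)
      linarith
    · exact Int.lt_ediv_add_one_mul_self _ (by lia)
  have hval : ∀ i, ((x i).val : ℤ) = if y i < E then y i - (E - n) else y i - E := by
    intro i
    rw [← hyx i, ZMod.val_intCast]
    have h1 : y 0 ≤ y i := hy.monotone (Fin.zero_le i)
    have h2 := hyn i 0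
    obtain ⟨q, rfl⟩ := hE
    split_ifs with h
    · rw [← Int.emod_eq_of_lt (a := y i - (n * q - n)) (b := n) (by lia) (by lia),
        show y i - (n * q - n) = y i + n * (1 - q) by ring, Int.add_mul_emod_self_left]
    · rw [← Int.emod_eq_of_lt (a := y i - n * q) (b := n) (by lia) (by lia),
        show y i - n * q = y i + n * (-q) by ring, Int.add_mul_emod_self_left]
  -- The rotation starts at the first index whose representative is past `E`, if there is one.
  obtain ⟨s, hs⟩ : ∃ s : Fin (2 * k + 1),
      (s = 0 ∧ ∀ i, y i < E) ∨ ∀ i, y i < E ↔ i < s := by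
    by_cases h : ∀ i, y i < E
    · exact ⟨0, Or.inl ⟨rfl, h⟩⟩
    · push Not at h
      have hne : (Finset.univ.filter fun i => E ≤ y i).Nonempty := by
        obtain ⟨i, hi⟩ := h
        exact ⟨i, by simpa using hi⟩
      refine ⟨Finset.min' _ hne, Or.inr fun i => ⟨fun hi => ?_, fun hi => ?_⟩⟩
      · have hm := Finset.min'_mem _ hne
        rw [Finset.mem_filter] at hm
        exact hy.lt_iff_lt.1 (hi.trans_le hm.2)
      · by_contra hc
        exact absurd (Finset.min'_le _ i (by simpa using hc)) (not_le.2 hi)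
  refine ⟨Equiv.addRight s, sign_addRight_odd k s, fun i j hij => ?_⟩
  have hi := Fin.val_add_eq_ite i s
  have hj := Fin.val_add_eq_ite j s
  have hij' : (i : ℕ) < j := hij
  have hjlt := j.isLt
  have hslt := s.isLt
  have hmono : ((i + s : Fin _) : ℕ) < (j + s : Fin _) → y (i + s) < y (j + s) := fun h => hy h
  have hn' := hyn (i + s) (j + s)
  zify
  simp only [Equiv.coe_addRight]
  rw [hval, hval]
  rcases hs with ⟨rfl, hs⟩ | hs
  · rw [if_pos (hs _), if_pos (hs _)]
    simp only [add_zero] at hmono ⊢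
    have := hmono hij'
    lia
  · have ha := hs (i + s)
    have hb := hs (j + s)
    rw [Fin.lt_def] at ha hb
    split_ifs at hi hj ⊢ <;> lia

/-- The cyclic sign of a tuple of odd length is the sign of the permutation that sorts its
representatives in `[0, n)`. -/
lemma cycSign_eq_of_strictMono (n : ℕ) (hn : 1 ≤ n) (k : ℕ) (x : Fin (2 * k + 1) → ZMod n)
    (τ : Equiv.Perm (Fin (2 * k + 1))) (hτ : StrictMono fun i => (x (τ i)).val) :
    cycSign n x = (Equiv.Perm.sign τ : ℤ) := by
  have : NeZero n := ⟨by lia⟩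
  have h : ∃ σ : Equiv.Perm (Fin (2 * k + 1)), InCyclicOrder n (x ∘ σ) := by
    refine ⟨τ, fun i => (x (τ i)).val, fun i j hij => Int.ofNat_lt.2 (hτ hij), fun i => by simp,
      fun i j => ?_⟩
    have := ZMod.val_lt (x (τ i))
    lia
  rw [cycSign, dif_pos h]
  obtain ⟨c, hc, hm⟩ := exists_rotation n hn k _ h.choose_spec
  have heq : (fun i => (x i).val) ∘ (h.choose * c) = (fun i => (x i).val) ∘ τ :=
    Tuple.unique_monotone (f := fun i => (x i).val) hm.monotone hτ.monotone
  have hinj : Function.Injective fun i => (x i).val := by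
    have := hτ.injective.comp τ.symm.injective
    simpa [Function.comp_def] using this
  have : h.choose * c = τ := Equiv.ext fun i => hinj (congrFun heq i)
  rw [← this, map_mul, hc, mul_one]

lemma cycSign_eq_zero (n : ℕ) {m : ℕ} (x : Fin m → ZMod n)
    (hx : ¬ Function.Injective x) : cycSign n x = 0 := by
  rw [cycSign, dif_neg]
  rintro ⟨σ, y, hy, hyx, hyn⟩
  apply hx
  have : Function.Injective (x ∘ σ) := by
    intro i j hij
    rw [← hyx i, ← hyx j, ZMod.intCast_eq_intCast_iff_dvd_sub] at hij
    have h1 := hyn i j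
    have h2 := hyn j i
    have := Int.eq_zero_of_abs_lt_dvd hij (by rw [abs_lt]; constructor <;> lia)
    exact hy.injective (by lia)
  exact (Equiv.injective_comp σ x).1 this

/-- Deleting `r` from the domain and `σ r` from the target of a permutation `σ` leaves a
permutation, whose sign is given by the cofactor rule. -/
lemma exists_perm_succAbove {m : ℕ} (σ : Equiv.Perm (Fin (m + 1))) (r : Fin (m + 1)) :
    ∃ τ : Equiv.Perm (Fin m), (∀ j, (σ r).succAbove (τ j) = σ (r.succAbove j)) ∧
      (Equiv.Perm.sign τ : ℤ) =
        (-1) ^ ((σ r : Fin (m + 1)) : ℕ) * Equiv.Perm.sign σ * (-1) ^ (r : ℕ) := by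
  -- Moving `r` and `σ r` to the front turns `σ` into a permutation that fixes `0`.
  obtain ⟨⟨p, τ⟩, hP⟩ := Equiv.Perm.decomposeFin.symm.surjective
    ((σ r).cycleRange * σ * r.cycleRange⁻¹)
  have hp : p = 0 := by
    have := congrArg (fun e => e 0) hP
    simpa [Equiv.Perm.inv_def] using this
  subst hp
  refine ⟨τ, fun j => ?_, ?_⟩
  · have := congrArg (fun e => e j.succ) hP
    simp only [Equiv.Perm.decomposeFin_symm_apply_succ, Equiv.swap_self, Equiv.refl_apply,
      Equiv.Perm.mul_apply, Equiv.Perm.inv_def, Fin.cycleRange_symm_succ] at this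
    rw [← Fin.cycleRange_symm_succ, this, Equiv.symm_apply_apply]
  · have := congrArg Equiv.Perm.sign hP
    rw [Equiv.Perm.decomposeFin.symm_sign] at this
    simp only [if_true, one_mul, map_mul, Equiv.Perm.sign_inv, Fin.sign_cycleRange] at this
    rw [this]
    push_cast
    rfl

open Classical in
lemma alternating_sum_indicator (k : ℕ) (b : Fin (2 * k + 2) → ℕ) (hb : Monotone b) :
    ∑ r : Fin (2 * k + 2),
      (-1 : ℤ) ^ (r : ℕ) * (if Function.Injective (b ∘ r.succAbove) then 1 else 0) = 0 := by
  by_cases hinj : Function.Injective b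
  · have : ∀ r : Fin (2 * k + 2), Function.Injective (b ∘ r.succAbove) :=
      fun r => hinj.comp Fin.succAbove_right_injective
    simp only [this, if_true, mul_one]
    rw [Fin.sum_univ_eq_sum_range (fun i => (-1 : ℤ) ^ i), neg_one_geom_sum,
      if_pos ⟨k + 1, by lia⟩]
  · obtain ⟨p, hp⟩ : ∃ p : Fin (2 * k + 1), b p.castSucc = b p.succ := by
      by_contra! h
      exact hinj (Fin.strictMono_iff_lt_succ.2 fun i =>
        lt_of_le_of_ne (hb (Fin.castSucc_lt_succ).le) (h i)).injective
    have hsame : b ∘ p.castSucc.succAbove = b ∘ p.succ.succAbove := by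
      funext j
      simp only [Function.comp]
      rcases lt_trichotomy j p with h | rfl | h
      · rw [Fin.succAbove_of_castSucc_lt _ _ (by simpa using h),
          Fin.succAbove_of_castSucc_lt _ _ (by rw [Fin.lt_def] at *; simp; lia)]
      · simp [hp]
      · rw [Fin.succAbove_of_le_castSucc _ _ (by rw [Fin.lt_def, Fin.le_def] at *; simp; lia),
          Fin.succAbove_of_le_castSucc _ _ (by rw [Fin.lt_def, Fin.le_def] at *; simp; lia)]
    have hne : p.castSucc ≠ p.succ := (Fin.castSucc_lt_succ).ne
    rw [Fintype.sum_eq_add p.castSucc p.succ hne]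
    · rw [hsame, Fin.val_succ, Fin.val_castSucc, pow_succ]
      ring
    · rintro r ⟨h1, h2⟩
      rw [if_neg, mul_zero]
      intro h
      obtain ⟨u, hu⟩ := Fin.exists_succAbove_eq h1.symm
      obtain ⟨v, hv⟩ := Fin.exists_succAbove_eq h2.symm
      have huv : u = v := h (by simp only [Function.comp, hu, hv, hp])
      exact hne (by rw [← hu, ← hv, huv])

/-- For every `n ≥ 1`, `k ≥ 0` and every `(2k+2)`-tuple of elements of `ℤ/n`,
the alternating sum of the cyclic signs of the `(2k+1)`-tuples obtained by
omitting one entry vanishes. -/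
theorem alternating_sum_cycSign_eq_zero (n : ℕ) (hn : 1 ≤ n) (k : ℕ)
    (a : Fin (2 * k + 2) → ZMod n) :
    ∑ i : Fin (2 * k + 2), (-1 : ℤ) ^ (i : ℕ) * cycSign n (a ∘ i.succAbove) = 0 := by
  classical
  have : NeZero n := ⟨by lia⟩
  set σ := Tuple.sort fun i => (a i).val with hσ
  set b : Fin (2 * k + 2) → ℕ := fun i => (a (σ i)).val with hbdef
  have hb : Monotone b := Tuple.monotone_sort fun i => (a i).val
  have key : ∀ r : Fin (2 * k + 2),
      (-1 : ℤ) ^ ((σ r : Fin (2 * k + 2)) : ℕ) * cycSign n (a ∘ (σ r).succAbove) =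
        Equiv.Perm.sign σ *
          ((-1 : ℤ) ^ (r : ℕ) * (if Function.Injective (b ∘ r.succAbove) then 1 else 0)) := by
    intro r
    obtain ⟨τ, hτ, hsign⟩ := exists_perm_succAbove σ r
    have hcomp : b ∘ r.succAbove = ZMod.val ∘ (a ∘ (σ r).succAbove) ∘ τ := by
      funext j
      simp [hbdef, hτ]
    split_ifs with hinj
    · have hm : StrictMono (b ∘ r.succAbove) :=
        (hb.comp (Fin.strictMono_succAbove r).monotone).strictMono_of_injective hinj
      rw [cycSign_eq_of_strictMono n hn k _ τ (by rw [hcomp] at hm; exact hm), hsign]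
      have hsq : (-1 : ℤ) ^ ((σ r : Fin (2 * k + 2)) : ℕ) *
          (-1) ^ ((σ r : Fin (2 * k + 2)) : ℕ) = 1 := by
        rw [← mul_pow]
        simp
      linear_combination ((Equiv.Perm.sign σ : ℤˣ) : ℤ) * (-1) ^ (r : ℕ) * hsq
    · rw [cycSign_eq_zero, mul_zero, mul_zero, mul_zero]
      intro h
      apply hinj
      rw [hcomp]
      exact (ZMod.val_injective n).comp (h.comp τ.injective)
  rw [← Equiv.sum_comp σ, Finset.sum_congr rfl fun r _ => key r, ← Finset.mul_sum,
    alternating_sum_indicator k b hb, mul_zero]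
end

section
/- Fix integers n ≥ 1 and k ≥ 0. For a chain D_0 ⊆ D_1 ⊆ ⋯ ⊆ D_{2k} of nonempty subsets of ℤ/n define c^k(D_0,…,D_{2k}) = ((−1)^k k! / ((2k)! · |D_0|·|D_1|⋯|D_{2k}|)) · Σ sgn_c(a_0, a_1, …, a_{2k}), the sum ranging over all tuples with a_i ∈ D_i for each i. Then for every chain C_0 ⊆ C_1 ⊆ ⋯ ⊆ C_{2k+1} of nonempty subsets of ℤ/n, the alternating sum Σ_{i=0}^{2k+1} (−1)^i · c^k(C_0, …, Ĉ_i, …, C_{2k+1}) equals 0, where Ĉ_i means that the set C_i is omitted from the chain. -/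
/-- The cyclic set cochain `c^k` evaluated on a chain `D_0 ⊆ ⋯ ⊆ D_{2k}` of
subsets of `ℤ/n`:
`c^k(D) = ((-1)^k k! / ((2k)! ⬝ |D_0|⋯|D_{2k}|)) ⬝ Σ_{a_i ∈ D_i} sgn_c(a_0,…,a_{2k})`. -/
noncomputable def cycCochain (n k : ℕ) (D : Fin (2 * k + 1) → Finset (ZMod n)) : ℚ :=
  ((-1) ^ k * (Nat.factorial k : ℚ)) /
      ((Nat.factorial (2 * k) : ℚ) * ∏ i, ((D i).card : ℚ)) *
    ∑ a ∈ Fintype.piFinset D, (cycSign n a : ℚ)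

lemma InCyclicOrder.injective {n m : ℕ} {x : Fin m → ZMod n} (h : InCyclicOrder n x) :
    Function.Injective x := by
  obtain ⟨y, hy, hyx, hyn⟩ := h
  intro i j hij
  rw [← hyx, ← hyx, ZMod.intCast_eq_intCast_iff_dvd_sub] at hij
  have h1 := hyn i j
  have h2 := hyn j i
  have h3 := Int.eq_zero_of_abs_lt_dvd hij (abs_lt.2 ⟨by linarith, by linarith⟩)
  exact hy.injective (by linarith)

/-- The linear sign of a tuple `x`: the sign of the permutation sorting the residues of its
entries in `[0, n)`, and `0` if two entries coincide. It is encoded as the sum over all sorted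
tuples `s` of the determinant of the incidence matrix of `s` and `x`; this form makes
antisymmetry and the Laplace expansion available. -/
def linSign (n : ℕ) [NeZero n] {m : ℕ} (x : Fin m → ZMod n) : ℤ :=
  ∑ s : Fin m → ZMod n with StrictMono (fun i => (s i).val),
    (Matrix.of fun i j => if s i = x j then (1 : ℤ) else 0).det

section

variable {n : ℕ} [NeZero n] {m : ℕ}

lemma linSign_comp_perm (x : Fin m → ZMod n) (σ : Equiv.Perm (Fin m)) :
    linSign n (x ∘ σ) = (Equiv.Perm.sign σ : ℤ) * linSign n x := by
  unfold linSign
  rw [Finset.mul_sum]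
  refine Finset.sum_congr rfl fun s _ => ?_
  rw [← Int.cast_id (n := ((Equiv.Perm.sign σ : ℤˣ) : ℤ)), ← Matrix.det_permute']
  rfl

lemma linSign_of_not_injective (x : Fin m → ZMod n) (hx : ¬ Function.Injective x) :
    linSign n x = 0 := by
  simp only [Function.Injective, not_forall] at hx
  obtain ⟨i, j, hij, hne⟩ := hx
  exact Finset.sum_eq_zero fun s _ => Matrix.det_zero_of_column_eq hne fun k => by simp [hij]

lemma linSign_of_strictMono (x : Fin m → ZMod n) (hx : StrictMono (fun i => (x i).val)) :
    linSign n x = 1 := by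
  have hinj : Function.Injective x := fun i j h => hx.injective (by simp [h])
  unfold linSign
  rw [Finset.sum_eq_single x]
  · convert Matrix.det_one (n := Fin m) (R := ℤ) with i j
    simp only [hinj.eq_iff]
    ext i j
    simp [Matrix.one_apply]
  · intro s hs hne
    -- A nonzero term of the Leibniz formula would exhibit `s` as a rearrangement of `x`.
    rw [Matrix.det_apply]
    refine Finset.sum_eq_zero fun g _ => ?_
    by_contra h0
    have h1 : ∀ i, s (g i) = x i := by
      intro i
      by_contra h
      exact h0 (by rw [Finset.prod_eq_zero (Finset.mem_univ i) (by simp [h]), smul_zero])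
    have hs' := (Finset.mem_filter.1 hs).2
    have h2 : (fun i => (s i).val) = fun i => (x i).val := by
      apply (StrictMono.range_inj hs' hx).1
      rw [← g.surjective.range_comp]
      congr 1
      funext i
      simp [h1]
    exact hne (funext fun i => ZMod.val_injective n (congrFun h2 i))
  · intro h
    simp [hx] at h

lemma exists_perm_strictMono_val (x : Fin m → ZMod n) (hx : Function.Injective x) :
    ∃ σ : Equiv.Perm (Fin m), StrictMono (fun i => (x (σ i)).val) :=
  ⟨Tuple.sort fun i => (x i).val, (Tuple.monotone_sort fun i => (x i).val).strictMono_of_injective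
    (((ZMod.val_injective n).comp hx).comp (Tuple.sort _).injective)⟩

/-- A sorted tuple of odd length can only be brought into cyclic order by even permutations. -/
lemma sign_eq_one_of_inCyclicOrder (k : ℕ) (z : Fin (2 * k + 1) → ZMod n)
    (hz : StrictMono (fun i => (z i).val)) (ρ : Equiv.Perm (Fin (2 * k + 1)))
    (h : InCyclicOrder n (z ∘ ρ)) : Equiv.Perm.sign ρ = 1 := by
  obtain ⟨y, hy, hyz, hyn⟩ := h
  have hn : (0 : ℤ) < n := by exact_mod_cast NeZero.pos n
  have hval : ∀ i, ((z (ρ i)).val : ℤ) = y i % n := fun i => by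
    rw [← ZMod.val_intCast, hyz]; rfl
  -- `ρ` inverts `i < j` exactly when `y i` and `y j` lie in different (necessarily adjacent)
  -- translates of `[0, n)`.
  have key : ∀ j, ∀ i ∈ Finset.Iio j, (if ρ i < ρ j then (1 : ℤˣ) else -1) =
      (y i / n).negOnePow * (y j / n).negOnePow := by
    intro j i hij
    have h1 := hy (Finset.mem_Iio.1 hij)
    have h2 := hyn j i
    have e1 := Int.emod_add_mul_ediv (y i) n
    have e2 := Int.emod_add_mul_ediv (y j) n
    have b1 := Int.emod_nonneg (y i) hn.ne'
    have b2 := Int.emod_nonneg (y j) hn.ne'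
    have c1 := Int.emod_lt_of_pos (y i) hn
    have c2 := Int.emod_lt_of_pos (y j) hn
    have hlt : ρ i < ρ j ↔ y i % n < y j % n := by
      rw [← hval, ← hval, Nat.cast_lt]
      exact hz.lt_iff_lt.symm
    have hq : y j / n = y i / n ∨ y j / n = y i / n + 1 := by
      have l1 : y i / n ≤ y j / n := Int.ediv_le_ediv hn h1.le
      have l2 : y j / n ≤ y i / n + 1 := by
        rw [← Int.add_mul_ediv_left _ _ hn.ne', mul_one]
        exact Int.ediv_le_ediv hn h2.le
      omega
    rw [← Int.negOnePow_add]
    rcases hq with hq | hq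
    · rw [hq] at e2 ⊢
      rw [if_pos (hlt.2 (by linarith)), Int.negOnePow_even _ ⟨_, rfl⟩]
    · rw [hq] at e2 ⊢
      rw [mul_add] at e2
      rw [if_neg (fun hh => by have := hlt.1 hh; linarith),
        Int.negOnePow_odd _ ⟨y i / n, by ring⟩]
  rw [Equiv.Perm.sign_eq_prod_prod_Iio,
    Finset.prod_congr rfl fun j _ => Finset.prod_congr rfl (key j)]
  simp_rw [Finset.prod_mul_distrib]
  rw [Finset.prod_comm' (t' := Finset.univ) (s' := fun i => Finset.Ioi i) (by simp),
    ← Finset.prod_mul_distrib]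
  -- Each of the signs occurs once for each of the `2k` other indices.
  refine Finset.prod_eq_one fun i _ => ?_
  rw [Finset.prod_const, Finset.prod_const, ← pow_add, Fin.card_Ioi, Fin.card_Iio,
    show 2 * k + 1 - 1 - (i : ℕ) + i = 2 * k by omega, pow_mul]
  simp

lemma inCyclicOrder_of_strictMono (x : Fin m → ZMod n) (hx : StrictMono (fun i => (x i).val)) :
    InCyclicOrder n x := by
  refine ⟨fun i => (x i).val, fun i j h => Nat.cast_lt.2 (hx h), fun i => by simp,
    fun i j => ?_⟩
  have := ZMod.val_lt (x i)
  dsimp only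
  omega

lemma cycSign_eq_linSign (k : ℕ) (x : Fin (2 * k + 1) → ZMod n) :
    cycSign n x = linSign n x := by
  unfold cycSign
  split_ifs with h
  · have hσ := h.choose_spec
    set σ := h.choose
    have hinj : Function.Injective x := by
      have := hσ.injective.comp σ.symm.injective
      simpa [Function.comp_assoc] using this
    obtain ⟨τ, hτ⟩ := exists_perm_strictMono_val x hinj
    have h1 : Equiv.Perm.sign (τ⁻¹ * σ) = 1 := by
      refine sign_eq_one_of_inCyclicOrder k (x ∘ τ) hτ _ ?_
      convert hσ using 1
      funext i
      simp
    have h2 : Equiv.Perm.sign σ = Equiv.Perm.sign τ := by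
      rw [map_mul, Equiv.Perm.sign_inv] at h1
      rw [← mul_one (Equiv.Perm.sign τ), ← h1, ← mul_assoc, Int.units_mul_self, one_mul]
    have h3 := linSign_comp_perm x τ
    rw [linSign_of_strictMono (x ∘ τ) hτ] at h3
    rw [h2]
    rcases Int.units_eq_one_or (Equiv.Perm.sign τ) with h4 | h4 <;> rw [h4] at h3 ⊢ <;>
      simp at h3 ⊢ <;> linarith
  · rw [linSign_of_not_injective]
    intro hinj
    obtain ⟨τ, hτ⟩ := exists_perm_strictMono_val x hinj
    exact h ⟨τ, inCyclicOrder_of_strictMono (x ∘ τ) hτ⟩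

/-- The incidence matrix of `s` and `v` with a row of ones added on top. -/
def augMatrix (s : Fin m → ZMod n) (v : Fin (m + 1) → ZMod n) :
    Matrix (Fin (m + 1)) (Fin (m + 1)) ℤ :=
  Matrix.of (Fin.cons (fun _ => 1) fun i j => if s i = v j then 1 else 0)

lemma sum_linSign_eq_sum_det (v : Fin (m + 1) → ZMod n) :
    ∑ i : Fin (m + 1), (-1 : ℤ) ^ (i : ℕ) * linSign n (v ∘ i.succAbove) =
      ∑ s : Fin m → ZMod n with StrictMono (fun i => (s i).val), (augMatrix s v).det := by
  simp_rw [linSign, Finset.mul_sum]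
  rw [Finset.sum_comm]
  refine Finset.sum_congr rfl fun s _ => ?_
  rw [Matrix.det_succ_row_zero]
  refine Finset.sum_congr rfl fun i _ => ?_
  simp only [augMatrix, Matrix.of_apply, Fin.cons_zero, mul_one]
  rfl

/-- The linear sign is a cocycle on tuples of even length. -/
lemma sum_linSign_removeNth (k : ℕ) (v : Fin (2 * k + 1 + 1) → ZMod n) :
    ∑ i : Fin (2 * k + 1 + 1), (-1 : ℤ) ^ (i : ℕ) * linSign n (v ∘ i.succAbove) = 0 := by
  by_cases hv : Function.Injective v
  · obtain ⟨σ, hσ⟩ := exists_perm_strictMono_val v hv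
    have hsorted : ∑ i : Fin (2 * k + 1 + 1),
        (-1 : ℤ) ^ (i : ℕ) * linSign n ((v ∘ σ) ∘ i.succAbove) = 0 := by
      have h1 : ∀ i : Fin (2 * k + 1 + 1), linSign n ((v ∘ σ) ∘ i.succAbove) = 1 := fun i =>
        linSign_of_strictMono _ (hσ.comp (Fin.strictMono_succAbove i))
      simp_rw [h1, mul_one]
      rw [Fin.sum_univ_eq_sum_range (fun i => (-1 : ℤ) ^ i), neg_one_geom_sum,
        if_pos ⟨k + 1, by ring⟩]
    have hperm : ∀ s : Fin (2 * k + 1) → ZMod n,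
        (augMatrix s (v ∘ σ)).det = (Equiv.Perm.sign σ : ℤ) * (augMatrix s v).det := by
      intro s
      rw [← Int.cast_id (n := ((Equiv.Perm.sign σ : ℤˣ) : ℤ)), ← Matrix.det_permute']
      congr 1
      ext i j
      refine Fin.cases ?_ (fun i => ?_) i <;> simp [augMatrix]
    rw [sum_linSign_eq_sum_det] at hsorted ⊢
    simp_rw [hperm] at hsorted
    rw [← Finset.mul_sum] at hsorted
    exact (mul_eq_zero.1 hsorted).resolve_left (Units.ne_zero _)
  · simp only [Function.Injective, not_forall] at hv
    obtain ⟨i, j, hij, hne⟩ := hv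
    rw [sum_linSign_eq_sum_det]
    refine Finset.sum_eq_zero fun s _ => Matrix.det_zero_of_column_eq hne fun l => ?_
    refine Fin.cases ?_ (fun l => ?_) l <;> simp [augMatrix, hij]

end

/-- A summand which does not depend on the `i`-th coordinate is counted once for each element of
the `i`-th factor. -/
lemma sum_piFinset_comp_succAbove {α : Type*} {m : ℕ} (C : Fin (m + 1) → Finset α)
    (i : Fin (m + 1)) (f : (Fin m → α) → ℚ) :
    ∑ a ∈ Fintype.piFinset C, f (a ∘ i.succAbove) =
      (C i).card * ∑ b ∈ Fintype.piFinset (C ∘ i.succAbove), f b := by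
  classical
  have h : ∑ a ∈ Fintype.piFinset C, f (a ∘ i.succAbove) =
      ∑ p ∈ C i ×ˢ Fintype.piFinset (C ∘ i.succAbove), f p.2 := by
    refine Finset.sum_equiv (Fin.insertNthEquiv (fun _ => α) i).symm (fun a => ?_) fun a _ => rfl
    rw [Fin.mem_piFinset_iff_pivot_removeNth i, Finset.mem_product]
    rfl
  simp [h, Finset.sum_product]

/-- The cocycle property of the cyclic set cocycle `c^k` on chains of nonempty
subsets of `ℤ/n`: the alternating sum of `c^k` over the `2k`-faces of a
`(2k+1)`-chain vanishes. -/
theorem alternating_sum_cycCochain_eq_zero (n : ℕ) (hn : 1 ≤ n) (k : ℕ)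
    (C : Fin (2 * k + 2) → Finset (ZMod n)) (hmono : Monotone C)
    (hne : ∀ i, (C i).Nonempty) :
    ∑ i : Fin (2 * k + 2), (-1 : ℚ) ^ (i : ℕ) * cycCochain n k (C ∘ i.succAbove) = 0 := by
  have : NeZero n := ⟨by omega⟩
  have hcard : ∀ i, ((C i).card : ℚ) ≠ 0 := fun i => by
    exact_mod_cast (Finset.card_pos.2 (hne i)).ne'
  have hface : ∀ i : Fin (2 * k + 2), cycCochain n k (C ∘ i.succAbove) =
      ((-1) ^ k * (Nat.factorial k : ℚ)) /
        ((Nat.factorial (2 * k) : ℚ) * ∏ j, ((C j).card : ℚ)) *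
      ∑ a ∈ Fintype.piFinset C, (linSign n (a ∘ i.succAbove) : ℚ) := by
    intro i
    have hprod : ∏ j, ((C (i.succAbove j)).card : ℚ) ≠ 0 :=
      Finset.prod_ne_zero_iff.2 fun j _ => hcard _
    have hfac : (Nat.factorial (2 * k) : ℚ) ≠ 0 := by positivity
    have hi := hcard i
    rw [sum_piFinset_comp_succAbove C i fun b => (linSign n b : ℚ),
      Fin.prod_univ_succAbove (fun j => ((C j).card : ℚ)) i, cycCochain]
    simp_rw [cycSign_eq_linSign, Function.comp_apply]
    field_simp
  simp_rw [hface, mul_left_comm _ (_ / _ : ℚ)]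
  rw [← Finset.mul_sum]
  simp_rw [Finset.mul_sum]
  rw [Finset.sum_comm, Finset.sum_eq_zero]
  intro a _
  rw [← Finset.mul_sum]
  have := sum_linSign_removeNth k a
  exact mul_eq_zero_of_right _ (by exact_mod_cast this)
end

section
/- Fix integers n ≥ 1 and k ≥ 0, and let C_0 ⊆ C_1 ⊆ ⋯ ⊆ C_{2k} be a chain of nonempty subsets of ℤ/n. Then the sum of sgn_c(a_0, a_1, …, a_{2k}) over all tuples with a_i ∈ C_i for each i is equal to the sum of sgn_c(a_0, a_1, …, a_{2k}) over only those tuples with a_0 ∈ C_0 and a_i ∈ C_i \ C_{i−1} for each i = 1, …, 2k. -/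
/-- If `y` and `z` list the same residues, both in cyclic order, then the permutation `ρ` relating
them is a rotation: `i ↦ ρ i - ρ 0` is strictly increasing, hence the identity. A rotation of
`Fin (2 * k + 1)` is even because its order is odd. -/
theorem sign_eq_one_of_cyclic {n k : ℕ} (ρ : Equiv.Perm (Fin (2 * k + 1)))
    (y z : Fin (2 * k + 1) → ℤ) (hy : StrictMono y) (hz : StrictMono z)
    (hyn : ∀ i j, y i < y j + (n : ℤ)) (hzn : ∀ i j, z i < z j + (n : ℤ))
    (h : ∀ i, ((z i : ℤ) : ZMod n) = ((y (ρ i) : ℤ) : ZMod n)) :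
    Equiv.Perm.sign ρ = 1 := by
  set r := ρ 0 with hr
  -- The representative of `y s - y r` in `[0, n)`.
  let W : Fin (2 * k + 1) → ℤ := fun s => y s - y r + if s < r then (n : ℤ) else 0
  have hW0 : ∀ s, 0 ≤ W s ∧ W s < n := by
    intro s
    have h1 := hyn r s
    have h2 := hyn s r
    by_cases hs : s < r
    · have := hy hs
      simp only [W, if_pos hs]
      constructor <;> linarith
    · have := hy.monotone (not_lt.mp hs)
      simp only [W, if_neg hs]
      constructor <;> linarith
  have hzW : ∀ i, z i - z 0 = W (ρ i) := by
    intro i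
    have h1 := hzn i 0
    have h2 := hz.monotone (Fin.zero_le i)
    have hc : ((z i - z 0 : ℤ) : ZMod n) = ((W (ρ i) : ℤ) : ZMod n) := by
      simp only [W]
      push_cast
      rw [h i, h 0]
      split_ifs <;> simp [hr]
    rw [ZMod.intCast_eq_intCast_iff] at hc
    have h3 := hW0 (ρ i)
    have hc' : (z i - z 0) % n = W (ρ i) % n := hc
    rwa [Int.emod_eq_of_lt (by linarith) (by linarith), Int.emod_eq_of_lt h3.1 h3.2] at hc'
  -- `W` is increasing when the indices are read cyclically starting from `r`.
  have hWmono : ∀ s t : Fin (2 * k + 1), s - r ≤ t - r → W s ≤ W t := by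
    intro s t hst
    have h1 := hyn s t
    rw [Fin.le_def] at hst
    have hval : ∀ u : Fin (2 * k + 1),
        (u < r → (u - r).val = 2 * k + 1 + u.val - r.val) ∧
        (¬ u < r → (u - r).val = u.val - r.val) := fun u =>
      ⟨Fin.coe_sub_iff_lt.mpr, fun hu => Fin.coe_sub_iff_le.mpr (not_lt.mp hu)⟩
    have hs := hval s
    have ht := hval t
    have hyst : s ≤ t → y s ≤ y t := fun h => hy.monotone h
    simp only [Fin.lt_def, Fin.le_def] at hs ht hyst
    simp only [W, Fin.lt_def]
    split_ifs with h2 h3 h3 <;> have := s.isLt <;> have := t.isLt <;> have := r.isLt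
    · have := hyst (by omega)
      linarith
    · omega
    · linarith
    · have := hyst (by omega)
      linarith
  have hsm : StrictMono (fun i => ρ i - r) := by
    intro i j hij
    by_contra hcon
    have h1 := hWmono _ _ (not_lt.mp hcon)
    rw [← hzW, ← hzW] at h1
    have := hz hij
    linarith
  have hrot : ∀ i, ρ i = i + r := by
    intro i
    have hid : (fun i => ρ i - r) = id := hsm.eq_id
    have := congrFun hid i
    simpa [sub_eq_iff_eq_add] using this
  have hpow : ρ ^ (2 * k + 1) = 1 := by
    have hq : ∀ (q : ℕ) i, (ρ ^ q) i = i + q • r := by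
      intro q
      induction q with
      | zero => simp
      | succ q ih => intro i; rw [pow_succ', Equiv.Perm.mul_apply, hrot, ih, succ_nsmul, add_assoc]
    ext1 i
    rw [hq]
    have : (2 * k + 1) • r = 0 := by
      simpa using card_nsmul_eq_zero (x := r)
    simp [this]
  have hs : (Equiv.Perm.sign ρ) ^ (2 * k + 1) = 1 := by rw [← map_pow, hpow, map_one]
  rcases Int.units_eq_one_or (Equiv.Perm.sign ρ) with h1 | h1
  · exact h1
  · rw [h1, Odd.neg_one_pow ⟨k, rfl⟩] at hs
    rw [h1, hs]

theorem sign_eq_of_inCyclicOrder {n k : ℕ} (x : Fin (2 * k + 1) → ZMod n)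
    (σ τ : Equiv.Perm (Fin (2 * k + 1)))
    (hσ : InCyclicOrder n (x ∘ σ)) (hτ : InCyclicOrder n (x ∘ τ)) :
    Equiv.Perm.sign σ = Equiv.Perm.sign τ := by
  obtain ⟨y, hy, hyx, hyn⟩ := hσ
  obtain ⟨z, hz, hzx, hzn⟩ := hτ
  have h := sign_eq_one_of_cyclic (σ⁻¹ * τ) y z hy hz hyn hzn (by
    intro i
    rw [hzx, hyx]
    simp)
  rw [Equiv.Perm.sign_mul, Equiv.Perm.sign_inv] at h
  rw [← mul_one (Equiv.Perm.sign σ), ← h, ← mul_assoc, Int.units_mul_self, one_mul]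

theorem cycSign_eq_of_inCyclicOrder {n k : ℕ} (x : Fin (2 * k + 1) → ZMod n)
    (σ : Equiv.Perm (Fin (2 * k + 1))) (hσ : InCyclicOrder n (x ∘ σ)) :
    cycSign n x = ((Equiv.Perm.sign σ : ℤˣ) : ℤ) := by
  have hex : ∃ σ : Equiv.Perm (Fin (2 * k + 1)), InCyclicOrder n (x ∘ σ) := ⟨σ, hσ⟩
  unfold cycSign
  rw [dif_pos hex, sign_eq_of_inCyclicOrder x _ σ hex.choose_spec hσ]

/-- The cyclic sign of a tuple of odd length is alternating. -/
theorem cycSign_comp_perm {n k : ℕ} (x : Fin (2 * k + 1) → ZMod n)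
    (π : Equiv.Perm (Fin (2 * k + 1))) :
    cycSign n (x ∘ π) = ((Equiv.Perm.sign π : ℤˣ) : ℤ) * cycSign n x := by
  by_cases hex : ∃ σ : Equiv.Perm (Fin (2 * k + 1)), InCyclicOrder n (x ∘ σ)
  · obtain ⟨σ, hσ⟩ := hex
    have h' : InCyclicOrder n ((x ∘ π) ∘ (π⁻¹ * σ : Equiv.Perm (Fin (2 * k + 1)))) := by
      convert hσ using 1
      ext i
      simp
    rw [cycSign_eq_of_inCyclicOrder x σ hσ, cycSign_eq_of_inCyclicOrder _ _ h']
    simp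
  · have hex' : ¬ ∃ σ : Equiv.Perm (Fin (2 * k + 1)), InCyclicOrder n ((x ∘ π) ∘ σ) := by
      rintro ⟨σ, hσ⟩
      exact hex ⟨π * σ, hσ⟩
    unfold cycSign
    rw [dif_neg hex, dif_neg hex', mul_zero]

/-- `j` is the least index such that some entry of `a` after position `j` lies in `C j`, and `i` is
the first such position. -/
def IsFirstPair {m : ℕ} {α : Type*} (C : Fin m → Finset α) (a : Fin m → α) (p : Fin m × Fin m) :
    Prop :=
  p.1 < p.2 ∧ a p.2 ∈ C p.1 ∧ (∀ j' < p.1, ∀ i', j' < i' → a i' ∉ C j') ∧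
    ∀ i', p.1 < i' → i' < p.2 → a i' ∉ C p.1

theorem exists_isFirstPair {m : ℕ} {α : Type*} (C : Fin m → Finset α) (a : Fin m → α)
    (h : ∃ j i, j < i ∧ a i ∈ C j) : ∃ p, IsFirstPair C a p := by
  obtain ⟨j, ⟨i₀, hi₀⟩, hj⟩ := WellFounded.has_min (wellFounded_lt (α := Fin m))
    {j | ∃ i, j < i ∧ a i ∈ C j} h
  obtain ⟨i, hi, hmin⟩ := WellFounded.has_min (wellFounded_lt (α := Fin m))
    {i | j < i ∧ a i ∈ C j} ⟨i₀, hi₀⟩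
  exact ⟨(j, i), hi.1, hi.2, fun j' hj' i' hi' hm => hj j' ⟨i', hi', hm⟩ hj',
    fun i' h1 h2 hm => hmin i' ⟨h1, hm⟩ h2⟩

theorem IsFirstPair.unique {m : ℕ} {α : Type*} {C : Fin m → Finset α} {a : Fin m → α}
    {p q : Fin m × Fin m} (hp : IsFirstPair C a p) (hq : IsFirstPair C a q) : p = q := by
  obtain ⟨j, i⟩ := p
  obtain ⟨j', i'⟩ := q
  obtain ⟨h1, h2, h3, h4⟩ := hp
  obtain ⟨g1, g2, g3, g4⟩ := hq
  dsimp only at *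
  have hj : j = j' := by
    rcases lt_trichotomy j j' with h | h | h
    · exact absurd h2 (g3 j h i h1)
    · exact h
    · exact absurd g2 (h3 j' h i' g1)
  subst hj
  rcases lt_trichotomy i i' with h | h | h
  · exact absurd h2 (g4 i h1 h)
  · rw [h]
  · exact absurd g2 (h4 i' g1 h)

/-- Exchanging the entries of the first pair does not change which pair is first; this is what makes
the exchange an involution. -/
theorem IsFirstPair.swap {m : ℕ} {α : Type*} {C : Fin m → Finset α} {a : Fin m → α}
    {p : Fin m × Fin m} (hp : IsFirstPair C a p) (ha : ∀ i, a i ∈ C i) :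
    IsFirstPair C (a ∘ Equiv.swap p.1 p.2) p := by
  obtain ⟨j, i⟩ := p
  obtain ⟨h1, h2, h3, h4⟩ := hp
  dsimp only at *
  refine ⟨h1, by simpa using ha j, ?_, ?_⟩
  -- For an index below `j`, both exchanged positions come later: later entries are only permuted.
  · intro j' hj' i' hi'
    apply h3 j' hj'
    rw [Equiv.swap_apply_def]
    split_ifs
    · exact hj'.trans h1
    · exact hj'
    · exact hi'
  · intro i' g1 g2
    simpa [Equiv.swap_apply_of_ne_of_ne g1.ne' g2.ne] using h4 i' g1 g2

theorem IsFirstPair.swap_mem {m : ℕ} {α : Type*} {C : Fin m → Finset α} {a : Fin m → α}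
    {p : Fin m × Fin m} (hC : Monotone C) (hp : IsFirstPair C a p) (ha : ∀ i, a i ∈ C i)
    (l : Fin m) : (a ∘ Equiv.swap p.1 p.2) l ∈ C l := by
  rw [Function.comp_apply, Equiv.swap_apply_def]
  split_ifs with h h'
  · rw [h]; exact hp.2.1
  · rw [h']; exact hC hp.1.le (ha _)
  · exact ha l

/-- As the chain is increasing, avoiding the preceding set amounts to avoiding all earlier sets: the
tuples of the restricted sum are exactly those that are not discarded. -/
theorem mem_differences_iff {α : Type*} [DecidableEq α] {N : ℕ} (C : Fin (N + 1) → Finset α)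
    (hC : Monotone C) (a : Fin (N + 1) → α) :
    a ∈ Fintype.piFinset
        (Fin.cases (C 0) (fun j => C j.succ \ C j.castSucc) : ∀ _ : Fin (N + 1), Finset α)
      ↔ (∀ i, a i ∈ C i) ∧ ¬ ∃ j i, j < i ∧ a i ∈ C j := by
  rw [Fintype.mem_piFinset]
  constructor
  · intro h
    refine ⟨fun i => ?_, ?_⟩
    · have := h i
      induction i using Fin.cases with
      | zero => exact this
      | succ i => exact (Finset.mem_sdiff.mp this).1
    · rintro ⟨j, i, hij, hm⟩
      have := h i
      induction i using Fin.cases with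
      | zero => exact absurd hij (Fin.not_lt_zero j)
      | succ i => exact (Finset.mem_sdiff.mp this).2 (hC (Fin.le_castSucc_iff.mpr hij) hm)
  · rintro ⟨h, hno⟩ i
    induction i using Fin.cases with
    | zero => exact h 0
    | succ i =>
      exact Finset.mem_sdiff.mpr ⟨h _, fun hm => hno ⟨_, _, i.castSucc_lt_succ, hm⟩⟩

/-- For a chain `C_0 ⊆ C_1 ⊆ ⋯ ⊆ C_{2k}` of nonempty subsets of `ℤ/n`, the sum of
`sgn_c(a_0,…,a_{2k})` over all tuples with `a_i ∈ C_i` equals the sum over only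
those tuples with `a_0 ∈ C_0` and `a_i ∈ C_i \ C_{i-1}` for `i = 1,…,2k`. -/
theorem sum_cycSign_eq_sum_over_differences (n : ℕ) (hn : 1 ≤ n) (k : ℕ)
    (C : Fin (2 * k + 1) → Finset (ZMod n)) (hmono : Monotone C)
    (hne : ∀ i, (C i).Nonempty) :
    ∑ a ∈ Fintype.piFinset C, cycSign n a
      = ∑ a ∈ Fintype.piFinset
            (Fin.cases (C 0) (fun j => C j.succ \ C j.castSucc) :
              ∀ _ : Fin (2 * k + 1), Finset (ZMod n)),
          cycSign n a := by
  set T := Fintype.piFinset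
    (Fin.cases (C 0) (fun j => C j.succ \ C j.castSucc) :
      ∀ _ : Fin (2 * k + 1), Finset (ZMod n)) with hT
  have hTmem : ∀ a, a ∈ T ↔ (∀ i, a i ∈ C i) ∧ ¬ ∃ j i, j < i ∧ a i ∈ C j :=
    mem_differences_iff C hmono
  have hsub : T ⊆ Fintype.piFinset C := fun a ha =>
    Fintype.mem_piFinset.mpr ((hTmem a).mp ha).1
  rw [← Finset.sum_sdiff hsub]
  suffices h0 : ∑ a ∈ Fintype.piFinset C \ T, cycSign n a = 0 by rw [h0, zero_add]
  have hdisc : ∀ a, a ∈ Fintype.piFinset C \ T ↔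
      (∀ i, a i ∈ C i) ∧ ∃ p, IsFirstPair C a p := by
    intro a
    rw [Finset.mem_sdiff, hTmem, Fintype.mem_piFinset]
    constructor
    · rintro ⟨h1, h2⟩
      exact ⟨h1, exists_isFirstPair C a (by tauto)⟩
    · rintro ⟨h1, p, hp⟩
      exact ⟨h1, fun h => h.2 ⟨_, _, hp.1, hp.2.1⟩⟩
  choose! P hP using fun a (ha : a ∈ Fintype.piFinset C \ T) => ((hdisc a).mp ha).2
  have hneg : ∀ a ∈ Fintype.piFinset C \ T,
      cycSign n (a ∘ Equiv.swap (P a).1 (P a).2) = - cycSign n a := by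
    intro a ha
    rw [cycSign_comp_perm, Equiv.Perm.sign_swap (hP a ha).1.ne]
    simp
  have hmem : ∀ a ∈ Fintype.piFinset C \ T,
      a ∘ Equiv.swap (P a).1 (P a).2 ∈ Fintype.piFinset C \ T := by
    intro a ha
    have h1 := ((hdisc a).mp ha).1
    exact (hdisc _).mpr ⟨(hP a ha).swap_mem hmono h1, _, (hP a ha).swap h1⟩
  refine Finset.sum_involution (fun a _ => a ∘ Equiv.swap (P a).1 (P a).2) ?_ ?_ hmem ?_
  · intro a ha
    rw [hneg a ha, add_neg_cancel]
  · intro a ha hnz heq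
    have := hneg a ha
    rw [heq] at this
    omega
  · intro a ha
    have hPP : P (a ∘ Equiv.swap (P a).1 (P a).2) = P a :=
      (hP _ (hmem a ha)).unique ((hP a ha).swap ((hdisc a).mp ha).1)
    simp only [hPP]
    ext l
    simp
end

section
/- Let n ≥ 1 be an integer and let a_0 > 0 and a_1, …, a_n ≥ 0 be real numbers. Then the integral of (a_0 + a_1·t_1 + a_2·t_2 + ⋯ + a_n·t_n)^{−(n+1)} with respect to Lebesgue measure over the simplex {(t_1, …, t_n) ∈ ℝⁿ : 1 ≥ t_1 ≥ t_2 ≥ ⋯ ≥ t_n ≥ 0} equals 1 / (n! · a_0 · (a_0+a_1) · (a_0+a_1+a_2) ⋯ (a_0+a_1+⋯+a_n)). -/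
/-!
The proof is an induction on `n` based on homogeneity. Every point of the simplex
`1 ≥ t₁ ≥ ⋯ ≥ t_{n+1} ≥ 0` with `t₁ = x > 0` is `(x, x u)` for a unique `u` in the simplex of
dimension `n`, and the substitution has Jacobian `x ^ n` (`lintegral_simplex_succ`). For fixed `u`,
writing `c = a₁ + ∑ aᵢ₊₂ uᵢ`, the integrand becomes `x ^ n / (a₀ + x c) ^ (n + 2)`, which has the
primitive `x ^ (n + 1) / ((n + 1) a₀ (a₀ + c x) ^ (n + 1))` (`lintegral_radial`). Integrating in
`x` first therefore yields `1 / ((n + 1) a₀)` times the same simplex integral in dimension `n`, with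
coefficients `(a₀ + a₁, a₂, …, a_{n+1})`. Eliminating the outermost variable in this way never
divides by a coefficient, so coefficients that vanish need no special treatment.

The induction is carried out for the lower Lebesgue integral, where Tonelli's theorem asks only for
measurability.
-/

open MeasureTheory

/-- The simplex `1 ≥ t₁ ≥ ⋯ ≥ tₙ ≥ 0`. -/
def orderSimplex (n : ℕ) : Set (Fin n → ℝ) :=
  {t : Fin n → ℝ | Antitone t ∧ (∀ i, 0 ≤ t i) ∧ ∀ i, t i ≤ 1}

lemma measurableSet_orderSimplex (n : ℕ) : MeasurableSet (orderSimplex n) := by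
  apply IsClosed.measurableSet
  have : orderSimplex n = {t | ∀ i j : Fin n, i ≤ j → t j ≤ t i} ∩
      ({t | ∀ i, 0 ≤ t i} ∩ {t | ∀ i, t i ≤ 1}) := by
    ext t; rfl
  rw [this]
  simp only [Set.ofPred_forall]
  refine IsClosed.inter ?_ (IsClosed.inter ?_ ?_)
  · exact isClosed_iInter fun i => isClosed_iInter fun j => isClosed_iInter fun _ =>
      isClosed_le (continuous_apply j) (continuous_apply i)
  · exact isClosed_iInter fun i => isClosed_le continuous_const (continuous_apply i)
  · exact isClosed_iInter fun i => isClosed_le (continuous_apply i) continuous_const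

/-- The slice of the simplex at first coordinate `x` is the dilation by `x` of the simplex of one
dimension less. -/
lemma cons_smul_mem_orderSimplex {n : ℕ} {x : ℝ} (hx : x ∈ Set.Ioc (0 : ℝ) 1) (u : Fin n → ℝ) :
    (Fin.cons x (x • u) : Fin (n + 1) → ℝ) ∈ orderSimplex (n + 1) ↔ u ∈ orderSimplex n := by
  obtain ⟨h0, h1⟩ := hx
  constructor
  · rintro ⟨ha, hp, -⟩
    refine ⟨fun i j hij => ?_, fun i => ?_, fun i => ?_⟩
    · have := ha (Fin.succ_le_succ_iff.2 hij)
      simpa [h0] using this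
    · have := hp i.succ
      simpa [h0] using this
    · have := ha (Fin.zero_le i.succ)
      simpa [h0] using this
  · rintro ⟨ha, hp, hl⟩
    refine ⟨fun i j hij => ?_, fun i => ?_, fun i => ?_⟩
    · cases j using Fin.cases with
      | zero => rw [Fin.le_zero_iff.1 hij]
      | succ j =>
        cases i using Fin.cases with
        | zero => simpa [h0] using hl j
        | succ i => simpa [h0] using ha (Fin.succ_le_succ_iff.1 hij)
    · cases i using Fin.cases with
      | zero => simpa using h0.le
      | succ i => simpa [h0] using hp i
    · cases i using Fin.cases with
      | zero => simpa using h1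
      | succ i =>
        simp only [Fin.cons_succ, Pi.smul_apply, smul_eq_mul]
        exact mul_le_one₀ h1 (hp i) (hl i)

lemma lintegral_comp_dilation {n : ℕ} {x : ℝ} (hx : 0 < x) (g : (Fin n → ℝ) → ENNReal)
    (hg : Measurable g) :
    ∫⁻ v, g v = ENNReal.ofReal (x ^ n) * ∫⁻ u, g (x • u) := by
  have h := Measure.map_addHaar_smul (volume : Measure (Fin n → ℝ)) hx.ne'
  have h2 : ∫⁻ u, g (x • u) = ∫⁻ v, g v ∂(Measure.map (x • ·) volume) :=
    (lintegral_map hg (measurable_const_smul x)).symm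
  rw [h2, h, lintegral_smul_measure, smul_eq_mul, ← mul_assoc, ← ENNReal.ofReal_mul (by positivity),
    Module.finrank_fin_fun, abs_of_pos (by positivity), mul_inv_cancel₀ (by positivity)]
  simp

lemma measurable_fin_cons {n : ℕ} :
    Measurable fun p : ℝ × (Fin n → ℝ) => (Fin.cons p.1 p.2 : Fin (n + 1) → ℝ) := by
  refine measurable_pi_iff.2 fun i => ?_
  cases i using Fin.cases with
  | zero => simpa using measurable_fst
  | succ i => exact (measurable_pi_apply i).comp measurable_snd

/-- Integration over the simplex in the coordinates `t = (x, x u)`. -/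
lemma lintegral_simplex_succ {n : ℕ} (F : (Fin (n + 1) → ℝ) → ENNReal) (hF : Measurable F) :
    ∫⁻ t in orderSimplex (n + 1), F t =
      ∫⁻ x in Set.Ioc (0 : ℝ) 1, ∫⁻ u in orderSimplex n,
        ENNReal.ofReal (x ^ n) * F (Fin.cons x (x • u)) := by
  set G := (orderSimplex (n + 1)).indicator F with hG
  have hGm : Measurable G := hF.indicator (measurableSet_orderSimplex _)
  have hGc : Measurable fun p : ℝ × (Fin n → ℝ) => G (Fin.cons p.1 p.2) :=
    hGm.comp measurable_fin_cons
  rw [← lintegral_indicator (measurableSet_orderSimplex _), ← hG]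
  have h1 : ∫⁻ t, G t = ∫⁻ p : ℝ × (Fin n → ℝ), G (Fin.cons p.1 p.2) := by
    rw [((volume_preserving_piFinSuccAbove (fun _ : Fin (n + 1) => ℝ) 0).symm).lintegral_map_equiv]
    simp [MeasurableEquiv.piFinSuccAbove, Fin.consEquiv]
  rw [h1, Measure.volume_eq_prod, lintegral_prod _ hGc.aemeasurable,
    ← lintegral_indicator measurableSet_Ioc]
  -- The slice `x = 0` is not a dilation of the lower simplex, but it is negligible.
  have hne : ∀ᵐ x : ℝ, x ≠ 0 := by simp [ae_iff]
  refine lintegral_congr_ae ?_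
  filter_upwards [hne] with x hx0
  by_cases hx : x ∈ Set.Ioc (0 : ℝ) 1
  · rw [Set.indicator_of_mem hx,
      lintegral_comp_dilation hx.1 (fun v => G (Fin.cons x v)) (hGc.comp measurable_prodMk_left),
      ← lintegral_const_mul' _ _ ENNReal.ofReal_ne_top,
      ← lintegral_indicator (measurableSet_orderSimplex _)]
    refine lintegral_congr fun u => ?_
    by_cases hu : u ∈ orderSimplex n
    · simp only [hG]
      rw [Set.indicator_of_mem ((cons_smul_mem_orderSimplex hx u).2 hu), Set.indicator_of_mem hu]
    · simp only [hG]
      rw [Set.indicator_of_notMem (mt (cons_smul_mem_orderSimplex hx u).1 hu),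
        Set.indicator_of_notMem hu, mul_zero]
  · rw [Set.indicator_of_notMem hx]
    refine (lintegral_congr fun v => ?_).trans lintegral_zero
    refine Set.indicator_of_notMem (fun hv => hx ?_) _
    have h0 := hv.2.1 0
    have h1 := hv.2.2 0
    simp only [Fin.cons_zero] at h0 h1
    exact ⟨lt_of_le_of_ne h0 (Ne.symm hx0), h1⟩

lemma lintegral_radial (n : ℕ) {b c : ℝ} (hb : 0 < b) (hc : 0 ≤ c) :
    ∫⁻ x in Set.Ioc (0 : ℝ) 1, ENNReal.ofReal (x ^ n * ((b + x * c) ^ (n + 2))⁻¹) =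
      ENNReal.ofReal (((n + 1) * b)⁻¹ * ((b + c) ^ (n + 1))⁻¹) := by
  have hpos : ∀ x : ℝ, 0 ≤ x → 0 < b + x * c := fun x hx => by positivity
  have hcont : ContinuousOn (fun x : ℝ => x ^ n * ((b + x * c) ^ (n + 2))⁻¹) (Set.Icc 0 1) := by
    refine ContinuousOn.mul (by fun_prop) (ContinuousOn.inv₀ (by fun_prop) fun x hx => ?_)
    exact (pow_pos (hpos x hx.1) _).ne'
  have hint : IntegrableOn (fun x : ℝ => x ^ n * ((b + x * c) ^ (n + 2))⁻¹) (Set.Ioc 0 1) :=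
    (hcont.integrableOn_Icc).mono_set Set.Ioc_subset_Icc_self
  rw [← ofReal_integral_eq_lintegral_ofReal hint, ← intervalIntegral.integral_of_le zero_le_one,
    intervalIntegral.integral_eq_sub_of_hasDerivAt
      (f := fun x : ℝ => x ^ (n + 1) * (((n + 1) * b) * (b + x * c) ^ (n + 1))⁻¹)]
  · simp [mul_comm]
  · intro x hx
    rw [Set.uIcc_of_le zero_le_one] at hx
    have hp := hpos x hx.1
    have hlin : HasDerivAt (fun x : ℝ => b + x * c) c x := by
      simpa using ((hasDerivAt_id x).mul_const c).const_add b
    have hden := (hlin.pow (n + 1)).const_mul (((n : ℝ) + 1) * b)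
    have hn : (n : ℝ) + 1 ≠ 0 := by positivity
    refine ((hasDerivAt_pow (n + 1) x).mul
      (hden.inv (by simp only [Pi.pow_apply]; positivity))).congr_deriv ?_
    rw [Nat.add_sub_cancel]
    push_cast
    simp only [Pi.pow_apply, Pi.inv_apply]
    field_simp
    ring
  · rw [intervalIntegrable_iff_integrableOn_Ioc_of_le zero_le_one]
    exact hint
  · filter_upwards [ae_restrict_mem measurableSet_Ioc] with x hx
    have := hpos x hx.1.le
    have := hx.1
    dsimp only [Pi.zero_apply]
    positivity

/-- Merging the first two coefficients of `a` shifts its partial sums by one. -/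
lemma sum_Iic_merge {n : ℕ} (a : Fin (n + 2) → ℝ) (j : Fin (n + 1)) :
    ∑ i ∈ Finset.Iic j, (Fin.cons (a 0 + a 1) fun i => a i.succ.succ : Fin (n + 1) → ℝ) i =
      ∑ i ∈ Finset.Iic j.succ, a i := by
  have h : ∀ {m : ℕ} (k : Fin m) (f : Fin m → ℝ),
      ∑ i ∈ Finset.Iic k, f i = ∑ i, if i ≤ k then f i else 0 := by
    intro m k f
    rw [← Finset.sum_filter]
    congr 1
    ext i
    simp
  have h1 : (1 : Fin (n + 2)) ≤ j.succ := by
    rw [← Fin.succ_zero_eq_one]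
    exact Fin.succ_le_succ_iff.2 (Fin.zero_le j)
  rw [h, h, Fin.sum_univ_succ, Fin.sum_univ_succ (n := n + 1), Fin.sum_univ_succ (n := n)]
  simp only [Fin.zero_le, if_true, Fin.cons_zero, Fin.cons_succ, Fin.succ_le_succ_iff,
    Fin.succ_zero_eq_one, h1, add_assoc]

/-- The simplex integral as a lower Lebesgue integral; the case `n = 0`, an integral over a point,
starts the induction. -/
theorem lintegral_orderSimplex (n : ℕ) (a : Fin (n + 1) → ℝ) (ha0 : 0 < a 0) (ha : ∀ i, 0 ≤ a i) :
    ∫⁻ t in orderSimplex n,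
        ENNReal.ofReal ((a 0 + ∑ i : Fin n, a i.succ * t i) ^ (n + 1))⁻¹
      = ENNReal.ofReal
          (1 / ((Nat.factorial n : ℝ) * ∏ j : Fin (n + 1), ∑ i ∈ Finset.Iic j, a i)) := by
  induction n with
  | zero =>
    have hS : orderSimplex 0 = Set.univ :=
      Set.eq_univ_of_forall fun t => ⟨fun i => i.elim0, fun i => i.elim0, fun i => i.elim0⟩
    have hI : Finset.Iic (0 : Fin 1) = {0} := by decide
    rw [hS, Measure.restrict_univ, volume_pi, Measure.pi_of_empty]
    simp [hI]
  | succ n ih =>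
    set b : Fin (n + 1) → ℝ := Fin.cons (a 0 + a 1) fun i => a i.succ.succ with hb
    have hb0 : 0 < b 0 := by
      have := ha 1
      simp only [hb, Fin.cons_zero]
      positivity
    have hbn : ∀ i, 0 ≤ b i := by
      intro i
      cases i using Fin.cases with
      | zero => exact hb0.le
      | succ i => simpa [hb] using ha _
    rw [lintegral_simplex_succ _ (by fun_prop), lintegral_lintegral_swap]
    · have key : ∀ u ∈ orderSimplex n,
          ∫⁻ x in Set.Ioc (0 : ℝ) 1, ENNReal.ofReal (x ^ n) *
            ENNReal.ofReal ((a 0 + ∑ i : Fin (n + 1), a i.succ *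
              (Fin.cons x (x • u) : Fin (n + 1) → ℝ) i) ^ (n + 1 + 1))⁻¹ =
          ENNReal.ofReal (((n : ℝ) + 1) * a 0)⁻¹ *
            ENNReal.ofReal ((b 0 + ∑ i : Fin n, b i.succ * u i) ^ (n + 1))⁻¹ := by
        intro u hu
        have hc : 0 ≤ a 1 + ∑ i : Fin n, a i.succ.succ * u i :=
          add_nonneg (ha _) (Finset.sum_nonneg fun i _ => mul_nonneg (ha _) (hu.2.1 i))
        have hr := lintegral_radial n ha0 hc
        rw [ENNReal.ofReal_mul (by positivity)] at hr
        have hbs : b 0 + ∑ i : Fin n, b i.succ * u i =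
            a 0 + (a 1 + ∑ i : Fin n, a i.succ.succ * u i) := by
          simp [hb, add_assoc]
        rw [hbs, ← hr]
        refine setLIntegral_congr_fun measurableSet_Ioc fun x hx => ?_
        have hx0 := hx.1.le
        rw [← ENNReal.ofReal_mul (by positivity)]
        congr 4
        rw [Fin.sum_univ_succ]
        simp only [Fin.cons_zero, Fin.cons_succ, Pi.smul_apply, smul_eq_mul, Fin.succ_zero_eq_one,
          mul_add, Finset.mul_sum]
        congr 2
        · ring
        · exact Finset.sum_congr rfl fun i _ => by ring
      rw [setLIntegral_congr_fun (measurableSet_orderSimplex n) key,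
        lintegral_const_mul' _ _ ENNReal.ofReal_ne_top, ih b hb0 hbn,
        ← ENNReal.ofReal_mul (by positivity)]
      congr 1
      have hI : Finset.Iic (0 : Fin (n + 2)) = {0} := by ext i; simp
      rw [Fin.prod_univ_succ (n := n + 1), hI, Finset.sum_singleton,
        Finset.prod_congr rfl fun j _ => sum_Iic_merge a j, Nat.factorial_succ]
      push_cast
      simp only [one_div, mul_inv]
      ring
    · have hm : Measurable fun p : ℝ × (Fin n → ℝ) =>
          (Fin.cons p.1 (p.1 • p.2) : Fin (n + 1) → ℝ) :=
        measurable_fin_cons.comp (measurable_fst.prodMk (measurable_fst.smul measurable_snd))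
      have hF : Measurable fun t : Fin (n + 1) → ℝ =>
          ENNReal.ofReal ((a 0 + ∑ i : Fin (n + 1), a i.succ * t i) ^ (n + 1 + 1))⁻¹ := by
        fun_prop
      have hp : Measurable fun p : ℝ × (Fin n → ℝ) => ENNReal.ofReal (p.1 ^ n) := by fun_prop
      exact (hp.mul (hF.comp hm)).aemeasurable

/-- For `n ≥ 1`, `a₀ > 0` and `a₁, …, aₙ ≥ 0`, the integral of
`(a₀ + a₁ t₁ + ⋯ + aₙ tₙ)^{-(n+1)}` over the simplex `1 ≥ t₁ ≥ ⋯ ≥ tₙ ≥ 0`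
equals `1 / (n! ⬝ a₀ (a₀+a₁) ⋯ (a₀+⋯+aₙ))`. -/
theorem integral_simplex_pow (n : ℕ) (hn : 1 ≤ n) (a : Fin (n + 1) → ℝ)
    (ha0 : 0 < a 0) (ha : ∀ i, 0 ≤ a i) :
    ∫ t : Fin n → ℝ in {t : Fin n → ℝ | Antitone t ∧ (∀ i, 0 ≤ t i) ∧ ∀ i, t i ≤ 1},
        ((a 0 + ∑ i : Fin n, a i.succ * t i) ^ (n + 1))⁻¹
      = 1 / ((Nat.factorial n : ℝ) * ∏ j : Fin (n + 1), ∑ i ∈ Finset.Iic j, a i) := by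
  change ∫ t : Fin n → ℝ in orderSimplex n, _ = _
  rw [integral_eq_lintegral_of_nonneg_ae, lintegral_orderSimplex n a ha0 ha, ENNReal.toReal_ofReal]
  · have : ∀ j : Fin (n + 1), 0 ≤ ∑ i ∈ Finset.Iic j, a i :=
      fun j => Finset.sum_nonneg fun i _ => ha i
    have := Finset.prod_nonneg fun j (_ : j ∈ Finset.univ) => this j
    positivity
  · filter_upwards [ae_restrict_mem (measurableSet_orderSimplex n)] with t ht
    have := Finset.sum_nonneg fun i (_ : i ∈ Finset.univ) => mul_nonneg (ha (Fin.succ i)) (ht.2.1 i)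
    simp only [Pi.zero_apply]
    positivity
  · exact Measurable.aestronglyMeasurable (by fun_prop)
end

section
/- Let a, b, c ≥ 1 be integers, n = a + b + c, and let χ : {1, …, n} → {0, 1, 2} be a function whose fibers χ^{−1}(0), χ^{−1}(1), χ^{−1}(2) have cardinalities a, b, c respectively. For (t_1, t_2) with 1 ≥ t_1 ≥ t_2 ≥ 0 set M(t_1,t_2) = a + b·t_1 + c·t_2, and for i ∈ {1,…,n} set w_i(t_1,t_2) = 1/M if χ(i) = 0, w_i = t_1/M if χ(i) = 1, and w_i = t_2/M if χ(i) = 2. Then the integral over {1 ≥ t_1 ≥ t_2 ≥ 0} of Σ_{1 ≤ i < j ≤ n} (∂w_i/∂t_1 · ∂w_j/∂t_2 − ∂w_i/∂t_2 · ∂w_j/∂t_1) dt_1 dt_2 equals (1 / (2·a·(a+b)·(a+b+c))) · Σ sgn_c(i, j, l), where the last sum is over all triples (i, j, l) with χ(i) = 0, χ(j) = 1, χ(l) = 2, and sgn_c is the cyclic sign of the triple regarded as elements of ℤ/n. -/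
/-!
All weights are quotients `N_i / M` of affine functions, where the coefficients of `N_i` are the
indicators of the three fibres of `χ`. For such quotients
`dw_i ∧ dw_j = det (N_i, N_j, M) / M³ dt₁ ∧ dt₂` (`integrand_eq`), where the determinant
`wedgeCoeff` of the coefficient vectors does not depend on `(t₁, t₂)`. Hence the integral is
`∑_{i<j} wedgeCoeff i j` times `∫ M⁻³`, and the latter equals `1 / (2a(a+b)(a+b+c))`, computed by
Fubini and two applications of the fundamental theorem of calculus (`integral_triangle`).

For the combinatorial side, the cyclic sign of a triple of distinct residues is
`s(i,j) + s(j,l) + s(l,i)`, where `s(x,y)` is `1` if `x < y`, `-1` if `y < x` and `0` otherwise,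
taken on the representatives in `{0, …, n-1}` (`cycSign_eq_orient3`). Summed over the
triples with colours `0, 1, 2`, the unused index of each term contributes the cardinality of its
fibre, and what remains is exactly `∑_{i<j} wedgeCoeff i j` (`sum_wedgeCoeff_eq`).
-/

open MeasureTheory

/-- The weight `w_i(t₁,t₂)`: `1/M`, `t₁/M` or `t₂/M` according to `χ i`, where
`M(t₁,t₂) = a + b t₁ + c t₂`. -/
noncomputable def cycWeight (n : ℕ) (a b c : ℕ) (χ : Fin n → Fin 3) (i : Fin n)
    (p : ℝ × ℝ) : ℝ :=
  (if χ i = 0 then 1 else if χ i = 1 then p.1 else p.2) /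
    ((a : ℝ) + (b : ℝ) * p.1 + (c : ℝ) * p.2)

/-! ### Cyclic signs of triples -/

/-- `S(p,q,r) = s(p,q) + s(q,r) + s(r,p)` with `s(x,y) = [x<y] - [y<x]`: for distinct integers this
is `1` or `-1` according to the orientation of the triple. -/
def orient3 (p q r : ℕ) : ℤ :=
  ((if p < q then 1 else 0) - (if q < p then 1 else 0)) +
  ((if q < r then 1 else 0) - (if r < q then 1 else 0)) +
  ((if r < p then 1 else 0) - (if p < r then 1 else 0))

/-- Write the representatives as `y k = f k + n m k`; since they lie in a window of length `n`,
`m 1 - m 0` and `m 2 - m 0` are `0` or `1`. -/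
lemma orient3_of_inCyclicOrder {n : ℕ} (f : Fin 3 → ℕ) (hf : ∀ k, f k < n)
    (h : InCyclicOrder n (fun k => ((f k : ℕ) : ZMod n))) :
    orient3 (f 0) (f 1) (f 2) = 1 := by
  obtain ⟨y, hy, hyx, hyn⟩ := h
  have e : ∀ k, ∃ m : ℤ, y k = f k + n * m := fun k => by
    have h1 : ((y k : ℤ) : ZMod n) = ((f k : ℤ) : ZMod n) := by simpa using hyx k
    obtain ⟨m, hm⟩ := (ZMod.intCast_eq_intCast_iff_dvd_sub _ _ _).1 h1.symm
    exact ⟨m, by linarith⟩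
  choose m hm using e
  have y01 : y 0 < y 1 := hy (by decide)
  have y12 : y 1 < y 2 := hy (by decide)
  have y20 := hyn 2 0
  have f0 := hf 0
  have f1 := hf 1
  have f2 := hf 2
  have hm1 := hm 1
  have hm2 := hm 2
  rw [hm 0] at y01 y20
  zify at f0 f1 f2
  have npos : (0 : ℤ) < n := by omega
  have key : ∀ k : Fin 3, (n : ℤ) * m 0 + f 0 < y k → y k < f 0 + n * m 0 + n →
      m k = m 0 ∨ m k = m 0 + 1 := by
    intro k h1 h2
    rw [hm k] at h1 h2
    have hk := hf k
    zify at hk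
    have l1 : m 0 - 1 < m k := by
      by_contra! hc
      nlinarith
    have l2 : m k < m 0 + 2 := by
      by_contra! hc
      nlinarith
    omega
  have k1 := key 1 (by linarith) (by linarith)
  have k2 := key 2 (by linarith) (by linarith)
  have r : (f 0 < f 1 ∧ f 1 < f 2) ∨ (f 1 < f 2 ∧ f 2 < f 0) ∨ (f 2 < f 0 ∧ f 0 < f 1) := by
    rw [hm1] at y01
    rw [hm1, hm2] at y12
    rw [hm2] at y20
    rcases k1 with k1 | k1 <;> rcases k2 with k2 | k2 <;> rw [k1] at y01 y12 <;>
      rw [k2] at y12 y20 <;> ring_nf at y01 y12 y20 <;> zify <;> omega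
  unfold orient3
  rcases r with r | r | r <;> split_ifs <;> omega

lemma perm_three_cases : ∀ σ : Equiv.Perm (Fin 3),
    (σ 0 = 0 ∧ σ 1 = 1 ∧ σ 2 = 2 ∧ Equiv.Perm.sign σ = 1) ∨
    (σ 0 = 1 ∧ σ 1 = 2 ∧ σ 2 = 0 ∧ Equiv.Perm.sign σ = 1) ∨
    (σ 0 = 2 ∧ σ 1 = 0 ∧ σ 2 = 1 ∧ Equiv.Perm.sign σ = 1) ∨
    (σ 0 = 1 ∧ σ 1 = 0 ∧ σ 2 = 2 ∧ Equiv.Perm.sign σ = -1) ∨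
    (σ 0 = 0 ∧ σ 1 = 2 ∧ σ 2 = 1 ∧ Equiv.Perm.sign σ = -1) ∨
    (σ 0 = 2 ∧ σ 1 = 1 ∧ σ 2 = 0 ∧ Equiv.Perm.sign σ = -1) := by decide

/-- `orient3` is alternating, so any permutation into cyclic order has sign `orient3`. -/
lemma sign_eq_orient3 {n : ℕ} (f : Fin 3 → ℕ) (hf : ∀ k, f k < n) (σ : Equiv.Perm (Fin 3))
    (h : InCyclicOrder n ((fun k => ((f k : ℕ) : ZMod n)) ∘ σ)) :
    ((Equiv.Perm.sign σ : ℤˣ) : ℤ) = orient3 (f 0) (f 1) (f 2) := by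
  have h1 := orient3_of_inCyclicOrder (fun k => f (σ k)) (fun k => hf _) h
  simp only [orient3] at h1 ⊢
  rcases perm_three_cases σ with ⟨a, b, c, d⟩ | ⟨a, b, c, d⟩ | ⟨a, b, c, d⟩ | ⟨a, b, c, d⟩ |
    ⟨a, b, c, d⟩ | ⟨a, b, c, d⟩ <;> rw [a, b, c] at h1 <;> rw [d] <;> push_cast <;> linarith

/-- A triple of distinct residues can be put in cyclic order: sort the representatives. -/
lemma exists_inCyclicOrder {n : ℕ} (f : Fin 3 → ℕ) (hf : ∀ k, f k < n)
    (hinj : Function.Injective f) :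
    ∃ σ : Equiv.Perm (Fin 3), InCyclicOrder n ((fun k => ((f k : ℕ) : ZMod n)) ∘ σ) := by
  refine ⟨Tuple.sort f, fun k => (f (Tuple.sort f k) : ℤ), ?_, fun k => by simp, fun i j => ?_⟩
  · have : StrictMono (f ∘ Tuple.sort f) :=
      (Tuple.monotone_sort f).strictMono_of_injective (hinj.comp (Tuple.sort f).injective)
    exact fun i j hij => Int.ofNat_lt.2 (this hij)
  · have := hf (Tuple.sort f i)
    dsimp only
    omega

lemma cycSign_eq_orient3 {n : ℕ} (i j l : Fin n) (hij : i ≠ j) (hjl : j ≠ l) (hil : i ≠ l) :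
    cycSign n ![((i : ℕ) : ZMod n), ((j : ℕ) : ZMod n), ((l : ℕ) : ZMod n)] =
      orient3 i j l := by
  have hx : ![((i : ℕ) : ZMod n), ((j : ℕ) : ZMod n), ((l : ℕ) : ZMod n)] =
      fun k => ((![(i : ℕ), j, l] k : ℕ) : ZMod n) := by
    ext k; fin_cases k <;> rfl
  have hf : ∀ k, ![(i : ℕ), j, l] k < n := by
    intro k; fin_cases k <;> simp
  have hinj : Function.Injective ![(i : ℕ), j, l] := by
    intro x y h
    have a1 := Fin.val_ne_of_ne hij
    have a2 := Fin.val_ne_of_ne hjl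
    have a3 := Fin.val_ne_of_ne hil
    fin_cases x <;> fin_cases y <;> simp at h ⊢ <;> omega
  have hex := exists_inCyclicOrder _ hf hinj
  rw [hx, cycSign, dif_pos hex]
  exact sign_eq_orient3 _ hf _ hex.choose_spec

/-! ### The curvature form in coordinates -/

/-- The indicator function of a fibre of `χ`, with real values. -/
def fibreInd {n : ℕ} (χ : Fin n → Fin 3) (k : Fin 3) (i : Fin n) : ℝ := if χ i = k then 1 else 0

lemma sum_fibreInd {n m : ℕ} (χ : Fin n → Fin 3) (k : Fin 3)
    (h : (Finset.univ.filter fun i => χ i = k).card = m) : ∑ i, fibreInd χ k i = m := by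
  simp [fibreInd, ← h]

/-- The determinant with rows the coefficients of the numerators of `w_i`, `w_j` and of `M`;
one has `dw_i ∧ dw_j = det / M³ dt₁ ∧ dt₂`. -/
def wedgeCoeff {n : ℕ} (a b c : ℕ) (χ : Fin n → Fin 3) (i j : Fin n) : ℝ :=
  c * (fibreInd χ 0 i * fibreInd χ 1 j - fibreInd χ 1 i * fibreInd χ 0 j) +
  a * (fibreInd χ 1 i * fibreInd χ 2 j - fibreInd χ 2 i * fibreInd χ 1 j) +
  b * (fibreInd χ 2 i * fibreInd χ 0 j - fibreInd χ 0 i * fibreInd χ 2 j)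

lemma cycWeight_eq (n a b c : ℕ) (χ : Fin n → Fin 3) (i : Fin n) :
    cycWeight n a b c χ i = fun p : ℝ × ℝ =>
      (fibreInd χ 0 i + fibreInd χ 1 i * p.1 + fibreInd χ 2 i * p.2) /
        ((a : ℝ) + (b : ℝ) * p.1 + (c : ℝ) * p.2) := by
  ext p
  unfold cycWeight fibreInd
  congr 1
  generalize χ i = k
  fin_cases k <;> simp

lemma fderiv_affine_div (α β γ a b c : ℝ) (p : ℝ × ℝ) (hM : a + b * p.1 + c * p.2 ≠ 0)
    (v : ℝ × ℝ) :
    fderiv ℝ (fun p : ℝ × ℝ => (α + β * p.1 + γ * p.2) / (a + b * p.1 + c * p.2)) p v =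
      ((β * v.1 + γ * v.2) * (a + b * p.1 + c * p.2) -
        (α + β * p.1 + γ * p.2) * (b * v.1 + c * v.2)) / (a + b * p.1 + c * p.2) ^ 2 := by
  have aff : ∀ α β γ : ℝ, HasFDerivAt (fun p : ℝ × ℝ => α + β * p.1 + γ * p.2)
      (β • ContinuousLinearMap.fst ℝ ℝ ℝ + γ • ContinuousLinearMap.snd ℝ ℝ ℝ) p := fun α β γ =>
    ((hasFDerivAt_fst.const_mul β).const_add α).add (hasFDerivAt_snd.const_mul γ)
  have hd := (aff α β γ).fun_mul ((hasDerivAt_inv hM).comp_hasFDerivAt p (aff a b c))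
  have hf := hd.fderiv
  simp only [Function.comp_def, ← div_eq_mul_inv] at hf
  rw [hf]
  simp
  field_simp
  ring

lemma integrand_eq (n a b c : ℕ) (χ : Fin n → Fin 3) (i j : Fin n) (p : ℝ × ℝ)
    (hM : (a : ℝ) + b * p.1 + c * p.2 ≠ 0) :
    fderiv ℝ (cycWeight n a b c χ i) p (1, 0) * fderiv ℝ (cycWeight n a b c χ j) p (0, 1) -
      fderiv ℝ (cycWeight n a b c χ i) p (0, 1) * fderiv ℝ (cycWeight n a b c χ j) p (1, 0) =
    wedgeCoeff a b c χ i j * (1 / ((a : ℝ) + b * p.1 + c * p.2) ^ 3) := by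
  simp only [cycWeight_eq, fderiv_affine_div _ _ _ _ _ _ p hM, wedgeCoeff]
  field_simp
  ring

/-! ### The integral over the triangle -/

/-- Fundamental theorem of calculus along a segment on which the affine denominator is positive. -/
lemma integral_inv_sq (a k : ℝ) (ha : 0 < a) (hk : 0 ≤ k) :
    IntervalIntegrable (fun x : ℝ => 1 / (a + k * x) ^ 2) volume 0 1 ∧
    ∫ x in (0 : ℝ)..1, 1 / (a + k * x) ^ 2 = 1 / (a * (a + k)) := by
  have pos : ∀ x ∈ Set.uIcc (0 : ℝ) 1, a + k * x ≠ 0 := fun x hx => by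
    rw [Set.uIcc_of_le zero_le_one] at hx
    have := mul_nonneg hk hx.1
    positivity
  have hi : IntervalIntegrable (fun x : ℝ => 1 / (a + k * x) ^ 2) volume 0 1 :=
    ContinuousOn.intervalIntegrable (by
      refine ContinuousOn.div (by fun_prop) (by fun_prop) fun x hx => pow_ne_zero _ (pos x hx))
  refine ⟨hi, ?_⟩
  rw [intervalIntegral.integral_eq_sub_of_hasDerivAt
    (f := fun x => x / (a * (a + k * x))) (fun x hx => ?_) hi]
  · simp
  · have h0 := pos x hx
    have hd : HasDerivAt (fun x => a * (a + k * x)) (a * (k * 1)) x :=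
      (((hasDerivAt_id x).const_mul k).const_add a).const_mul a
    refine ((hasDerivAt_id x).fun_div hd (mul_ne_zero ha.ne' h0)).congr_deriv ?_
    simp only [id]
    field_simp
    ring

lemma integral_inv_cube (A c x : ℝ) (hA : 0 < A) (hc : 0 < c) (hx : 0 ≤ x) :
    ∫ y in (0 : ℝ)..x, 1 / (A + c * y) ^ 3 =
      1 / (2 * c) * (1 / A ^ 2 - 1 / (A + c * x) ^ 2) := by
  have pos : ∀ y ∈ Set.uIcc (0 : ℝ) x, A + c * y ≠ 0 := fun y hy => by
    rw [Set.uIcc_of_le hx] at hy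
    have := mul_nonneg hc.le hy.1
    positivity
  have hi : IntervalIntegrable (fun y : ℝ => 1 / (A + c * y) ^ 3) volume 0 x :=
    ContinuousOn.intervalIntegrable (by
      refine ContinuousOn.div (by fun_prop) (by fun_prop) fun x hx => pow_ne_zero _ (pos x hx))
  rw [intervalIntegral.integral_eq_sub_of_hasDerivAt
    (f := fun y => -(1 / (2 * c)) * (1 / (A + c * y) ^ 2)) (fun y hy => ?_) hi]
  · simp only [mul_zero, add_zero]
    ring
  · have h0 := pos y hy
    have hd : HasDerivAt (fun y => (A + c * y) ^ 2) (2 * (A + c * y) ^ 1 * (c * 1)) y :=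
      (((hasDerivAt_id y).const_mul c).const_add A).fun_pow 2
    refine (((hasDerivAt_const y (1 : ℝ)).fun_div hd (pow_ne_zero 2 h0)).const_mul
      (-(1 / (2 * c)))).congr_deriv ?_
    field_simp
    ring

/-- `∫ M⁻³` over a triangle is its area divided by the product of the vertex values of `M`. -/
lemma integral_triangle (a b c : ℝ) (ha : 0 < a) (hb : 0 < b) (hc : 0 < c) :
    ∫ p : ℝ × ℝ in {p : ℝ × ℝ | p.1 ≤ 1 ∧ p.2 ≤ p.1 ∧ 0 ≤ p.2},
      1 / (a + b * p.1 + c * p.2) ^ 3 = 1 / (2 * a * (a + b) * (a + b + c)) := by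
  set T : Set (ℝ × ℝ) := {p : ℝ × ℝ | p.1 ≤ 1 ∧ p.2 ≤ p.1 ∧ 0 ≤ p.2} with hT
  have hcl : IsClosed T :=
    (isClosed_le continuous_fst continuous_const).inter
      ((isClosed_le continuous_snd continuous_fst).inter
        (isClosed_le continuous_const continuous_snd))
  have hcomp : IsCompact T := by
    refine (isCompact_Icc (a := ((0, 0) : ℝ × ℝ)) (b := (1, 1))).of_isClosed_subset hcl ?_
    rintro ⟨x, y⟩ ⟨h1, h2, h3⟩
    dsimp only at h1 h2 h3
    exact ⟨⟨h3.trans h2, h3⟩, ⟨h1, h2.trans h1⟩⟩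
  have hint : IntegrableOn (fun p : ℝ × ℝ => 1 / (a + b * p.1 + c * p.2) ^ 3) T volume := by
    refine ContinuousOn.integrableOn_compact hcomp
      (ContinuousOn.div (by fun_prop) (by fun_prop) ?_)
    rintro ⟨x, y⟩ ⟨h1, h2, h3⟩
    dsimp only at h1 h2 h3 ⊢
    have hx : 0 ≤ x := h3.trans h2
    positivity
  have hind := (integrable_indicator_iff hcl.measurableSet).2 hint
  rw [← integral_indicator hcl.measurableSet]
  rw [Measure.volume_eq_prod] at hind ⊢
  rw [integral_prod _ hind]
  have inner : ∀ x : ℝ,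
      (∫ y, T.indicator (fun p : ℝ × ℝ => 1 / (a + b * p.1 + c * p.2) ^ 3) (x, y)) =
      (Set.Icc (0 : ℝ) 1).indicator (fun x => 1 / (2 * c) *
        (1 / (a + b * x) ^ 2 - 1 / (a + (b + c) * x) ^ 2)) x := by
    intro x
    by_cases hx : x ∈ Set.Icc (0 : ℝ) 1
    · have hx0 := hx.1
      rw [Set.indicator_of_mem hx]
      have : (fun y => T.indicator (fun p : ℝ × ℝ => 1 / (a + b * p.1 + c * p.2) ^ 3) (x, y)) =
          (Set.Icc 0 x).indicator (fun y => 1 / (a + b * x + c * y) ^ 3) := by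
        ext y
        have hiff : (x, y) ∈ T ↔ y ∈ Set.Icc 0 x :=
          ⟨fun h => ⟨h.2.2, h.2.1⟩, fun h => ⟨hx.2, h.2, h.1⟩⟩
        simp only [Set.indicator, hiff]
      rw [this, integral_indicator measurableSet_Icc, integral_Icc_eq_integral_Ioc,
        ← intervalIntegral.integral_of_le hx0,
        integral_inv_cube _ c x (by positivity) hc hx0]
      ring_nf
    · rw [Set.indicator_of_notMem hx]
      refine integral_eq_zero_of_ae (Filter.Eventually.of_forall fun y => ?_)
      refine Set.indicator_of_notMem (fun h => hx ?_) _
      exact ⟨h.2.2.trans h.2.1, h.1⟩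
  simp only [inner]
  rw [integral_indicator measurableSet_Icc, integral_Icc_eq_integral_Ioc,
    ← intervalIntegral.integral_of_le zero_le_one, intervalIntegral.integral_const_mul,
    intervalIntegral.integral_sub (integral_inv_sq a b ha hb.le).1
      (integral_inv_sq a (b + c) ha (by positivity)).1,
    (integral_inv_sq a b ha hb.le).2, (integral_inv_sq a (b + c) ha (by positivity)).2]
  have : a + (b + c) ≠ 0 := by positivity
  have : a + b + c ≠ 0 := by positivity
  field_simp
  ring

/-! ### Comparison with the cyclic cocycle -/

/-- Summing `s(i,j) + s(j,l) + s(l,i)` over the triples with colours `0, 1, 2`, the index absent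
from each summand ranges freely over its fibre and contributes the factor `c`, `a` or `b`. -/
lemma sum_wedgeCoeff_eq (n a b c : ℕ) (χ : Fin n → Fin 3)
    (h0 : (Finset.univ.filter fun i => χ i = 0).card = a)
    (h1 : (Finset.univ.filter fun i => χ i = 1).card = b)
    (h2 : (Finset.univ.filter fun i => χ i = 2).card = c) :
    ∑ i : Fin n, ∑ j ∈ Finset.Ioi i, wedgeCoeff a b c χ i j =
      ∑ i : Fin n, ∑ j : Fin n, ∑ l : Fin n,
        (if χ i = 0 ∧ χ j = 1 ∧ χ l = 2 then
          (cycSign n ![((i : ℕ) : ZMod n), ((j : ℕ) : ZMod n), ((l : ℕ) : ZMod n)] : ℝ)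
        else 0) := by
  have hA := sum_fibreInd χ 0 h0
  have hB := sum_fibreInd χ 1 h1
  have hC := sum_fibreInd χ 2 h2
  set A := fibreInd χ 0 with hAdef
  set B := fibreInd χ 1 with hBdef
  set C := fibreInd χ 2 with hCdef
  set o : Fin n → Fin n → ℝ := fun i j => if i < j then 1 else 0 with ho
  set s : Fin n → Fin n → ℝ := fun i j => o i j - o j i with hs
  -- expands a bilinear sum against the antisymmetric kernel `s` as a sum over `i < j`
  have anti : ∀ F G : Fin n → ℝ, ∑ i, ∑ j, F i * G j * s i j =
      ∑ i, ∑ j, (F i * G j - G i * F j) * o i j := by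
    intro F G
    have : ∑ i, ∑ j, F i * G j * o j i = ∑ i, ∑ j, G i * F j * o i j := by
      rw [Finset.sum_comm]
      exact Finset.sum_congr rfl fun i _ => Finset.sum_congr rfl fun j _ => by ring
    simp only [hs, mul_sub, sub_mul, Finset.sum_sub_distrib, this]
  have lhs : ∑ i : Fin n, ∑ j ∈ Finset.Ioi i, wedgeCoeff a b c χ i j =
      c * ∑ i, ∑ j, A i * B j * s i j + a * ∑ i, ∑ j, B i * C j * s i j +
        b * ∑ i, ∑ j, C i * A j * s i j := by
    rw [anti, anti, anti]
    simp only [Finset.mul_sum, ← Finset.sum_add_distrib]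
    refine Finset.sum_congr rfl fun i _ => ?_
    have : Finset.Ioi i = Finset.univ.filter (fun j => i < j) := by ext; simp
    rw [this, Finset.sum_filter]
    refine Finset.sum_congr rfl fun j _ => ?_
    simp only [ho, wedgeCoeff]
    split_ifs <;> ring
  have term : ∀ i j l : Fin n, (if χ i = 0 ∧ χ j = 1 ∧ χ l = 2 then
        (cycSign n ![((i : ℕ) : ZMod n), ((j : ℕ) : ZMod n), ((l : ℕ) : ZMod n)] : ℝ)
        else 0) = A i * B j * s i j * C l + A i * (B j * C l * s j l) +
          B j * (C l * A i * s l i) := by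
    intro i j l
    by_cases h : χ i = 0 ∧ χ j = 1 ∧ χ l = 2
    · obtain ⟨hi, hj, hl⟩ := h
      have d1 : i ≠ j := by rintro rfl; simp [hi] at hj
      have d2 : j ≠ l := by rintro rfl; simp [hj] at hl
      have d3 : i ≠ l := by rintro rfl; simp [hi] at hl
      rw [if_pos ⟨hi, hj, hl⟩, cycSign_eq_orient3 i j l d1 d2 d3]
      simp [hAdef, hBdef, hCdef, fibreInd, hi, hj, hl, orient3, hs, ho]
    · rw [if_neg h]
      have : A i * B j * C l = 0 := by
        simp only [hAdef, hBdef, hCdef, fibreInd]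
        split_ifs <;> simp_all
      linear_combination -(s i j + s j l + s l i) * this
  have t1 : ∑ i, ∑ j, ∑ l, A i * B j * s i j * C l = c * ∑ i, ∑ j, A i * B j * s i j := by
    simp only [← Finset.mul_sum, ← Finset.sum_mul, hC]
    ring
  have t2 : ∑ i, ∑ j, ∑ l, A i * (B j * C l * s j l) = a * ∑ i, ∑ j, B i * C j * s i j := by
    simp only [← Finset.mul_sum, ← Finset.sum_mul, hA]
  have t3 : ∑ i, ∑ j, ∑ l, B j * (C l * A i * s l i) = b * ∑ i, ∑ j, C i * A j * s i j := by
    rw [Finset.sum_comm]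
    simp only [← Finset.mul_sum, ← Finset.sum_mul, hB]
    rw [Finset.sum_comm]
  simp only [term, Finset.sum_add_distrib]
  rw [lhs, t1, t2, t3]

/-- The curvature integral over a 2-simplex of cyclic weight systems equals the
cyclic set cocycle: the integral of
`Σ_{i<j} (∂w_i/∂t₁ ∂w_j/∂t₂ − ∂w_i/∂t₂ ∂w_j/∂t₁)` over `1 ≥ t₁ ≥ t₂ ≥ 0` equals
`(1/(2a(a+b)(a+b+c))) Σ sgn_c(i,j,l)`, the sum over triples with
`χ i = 0`, `χ j = 1`, `χ l = 2`. -/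
theorem curvature_integral_eq_cyclic_cocycle (n a b c : ℕ)
    (ha : 1 ≤ a) (hb : 1 ≤ b) (hc : 1 ≤ c) (hn : n = a + b + c)
    (χ : Fin n → Fin 3)
    (h0 : (Finset.univ.filter fun i => χ i = 0).card = a)
    (h1 : (Finset.univ.filter fun i => χ i = 1).card = b)
    (h2 : (Finset.univ.filter fun i => χ i = 2).card = c) :
    (∫ p : ℝ × ℝ in {p : ℝ × ℝ | p.1 ≤ 1 ∧ p.2 ≤ p.1 ∧ 0 ≤ p.2},
        ∑ i : Fin n, ∑ j ∈ Finset.Ioi i,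
          (fderiv ℝ (cycWeight n a b c χ i) p (1, 0) *
              fderiv ℝ (cycWeight n a b c χ j) p (0, 1) -
            fderiv ℝ (cycWeight n a b c χ i) p (0, 1) *
              fderiv ℝ (cycWeight n a b c χ j) p (1, 0)))
      = (1 / (2 * (a : ℝ) * ((a : ℝ) + b) * ((a : ℝ) + b + c))) *
          ∑ i : Fin n, ∑ j : Fin n, ∑ l : Fin n,
            (if χ i = 0 ∧ χ j = 1 ∧ χ l = 2 then
              (cycSign n ![((i : ℕ) : ZMod n), ((j : ℕ) : ZMod n), ((l : ℕ) : ZMod n)] : ℝ)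
            else 0) := by
  have ha' : (0 : ℝ) < a := by exact_mod_cast ha
  have hb' : (0 : ℝ) < b := by exact_mod_cast hb
  have hc' : (0 : ℝ) < c := by exact_mod_cast hc
  have hmeas : MeasurableSet {p : ℝ × ℝ | p.1 ≤ 1 ∧ p.2 ≤ p.1 ∧ 0 ≤ p.2} :=
    ((isClosed_le continuous_fst continuous_const).inter
      ((isClosed_le continuous_snd continuous_fst).inter
        (isClosed_le continuous_const continuous_snd))).measurableSet
  rw [← sum_wedgeCoeff_eq n a b c χ h0 h1 h2, ← integral_triangle a b c ha' hb' hc',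
    mul_comm, ← integral_const_mul]
  refine setIntegral_congr_fun hmeas ?_
  rintro ⟨x, y⟩ ⟨p1, p2, p3⟩
  dsimp only at p1 p2 p3
  have hx : 0 ≤ x := p3.trans p2
  have hM : (a : ℝ) + b * (x, y).1 + c * (x, y).2 ≠ 0 := by
    dsimp only
    positivity
  simp only [integrand_eq n a b c χ _ _ (x, y) hM, ← Finset.sum_mul]
end

section
/- Let k ≥ 1 and n ≥ 1 be integers and let χ : {1, …, n} → {0, 1, …, 2k} be a function with a_j = |χ^{−1}(j)| and a_0 ≥ 1; set C_j = χ^{−1}({0, 1, …, j}), so C_0 ⊆ C_1 ⊆ ⋯ ⊆ C_{2k} = {1,…,n}. For t = (t_1, …, t_{2k}) with 1 ≥ t_1 ≥ ⋯ ≥ t_{2k} ≥ 0 set t_0 = 1, M(t) = Σ_{j=0}^{2k} a_j t_j, and w_i(t) = t_{χ(i)}/M(t) for i ∈ {1,…,n}. Then the integral over the simplex {1 ≥ t_1 ≥ ⋯ ≥ t_{2k} ≥ 0} of Σ_{1 ≤ i_1 < i_2 < ⋯ < i_{2k} ≤ n} det(∂w_{i_l}/∂t_m)_{l,m = 1,…,2k}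 with respect to Lebesgue measure equals (1 / ((2k)! · |C_0|·|C_1|⋯|C_{2k}|)) · Σ sgn_c(x_0, x_1, …, x_{2k}), where the last sum is over all tuples with x_0 ∈ C_0 and x_j ∈ C_j \ C_{j−1} for j = 1, …, 2k, and sgn_c is the cyclic sign in ℤ/n. -/
/-!
At a point `t` of the simplex write `M = ∑ a_j t_j` and `d = 2k`. The weights depend only on `χ` and
have total mass one, so `∑ a_j d(t_j / M) = 0`; this identifies the Jacobian determinant of the
weights `w_{f l}` with `M ^ (-(d+1))` times the determinant `det N` of the matrix with rows `a` and
`e_{χ (f l)}` (`det_jacobian_eq`). Hence the integrand is a constant `S` times `M ^ (-(d+1))`.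

The integral of `M ^ (-(d+1))` over the ordered simplex is `1 / (d! ∏ |C_j|)`, the numbers `|C_j|`
being the values of `M` at the vertices (`integral_ordSimplex`).

The constant `S` is evaluated combinatorially (`sum_selDet_eq`). As `a = ∑ i, e_{χ i}`, expanding the
first row turns `S` into a sum over an increasing `d`-tuple `f` and one more element `i` of the sign
of `χ` on the tuple `(i, f)`. Sorting `i` into `f` at position `q` costs `(-1)^q`, and the
alternating sum over the `d + 1` positions is `1`, since `d` is even. There remain the
increasing `(d+1)`-tuples on which `χ` is a bijection, each counted with the sign of that bijection.
Unsorting them gives the tuples `x` with `χ (x j) = j`, that is `x_j ∈ C_j \ C_{j-1}`, counted with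
their cyclic sign, which for injective tuples of odd length is the sign of the sorting permutation
(`cycSign_eq_sign_sort`).
-/

open MeasureTheory

/-- The weight `w_i(t) = t_{χ i} / M(t)` where `t₀ = 1` and
`M(t) = Σ_j a_j t_j`. -/
noncomputable def cycWeightPow (n k : ℕ) (a : Fin (2 * k + 1) → ℕ)
    (χ : Fin n → Fin (2 * k + 1)) (i : Fin n) (t : Fin (2 * k) → ℝ) : ℝ :=
  (Fin.cases (motive := fun _ => ℝ) 1 t (χ i)) /
    ((a 0 : ℝ) + ∑ j : Fin (2 * k), (a j.succ : ℝ) * t j)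

/-! ### The cyclic sign of an injective tuple -/

/-- For a tuple of odd length, every permutation putting it in cyclic order has the sign of the
sorting permutation. Given nonnegative integer representatives `y`, either all of them are below
`n`, and then the permutation sorts the tuple; or the last one is at least `n`, and moving it to the
front after subtracting `n` composes the permutation with a rotation, which is even, and decreases
`∑ i, y i`. The induction is on the bound `N` for this sum. -/
theorem sign_eq_of_cyclic {n m : ℕ} (hn : 1 ≤ n) (hm : Even m) (x : Fin (m + 1) → Fin n)
    (hx : Function.Injective x) (N : ℕ) :
    ∀ (σ : Equiv.Perm (Fin (m + 1))) (y : Fin (m + 1) → ℤ), StrictMono y →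
      (∀ i, ((y i : ℤ) : ZMod n) = ((x (σ i) : ℕ) : ZMod n)) →
      (∀ i j, y i < y j + (n : ℤ)) → (∀ i, 0 ≤ y i) → (∑ i, y i) ≤ N →
      Equiv.Perm.sign σ = Equiv.Perm.sign (Tuple.sort x) := by
  induction N with
  | zero =>
    intro σ y hy hc hr h0 hN
    have hmono : Monotone (x ∘ σ) := by
      have hz : ∀ i, y i = 0 := by
        intro i
        have := Finset.single_le_sum (f := y) (fun j _ => h0 j) (Finset.mem_univ i)
        have := h0 i
        push_cast at hN
        omega
      intro i j hij
      rcases hij.eq_or_lt with h | h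
      · rw [h]
      · have := hy h
        rw [hz i, hz j] at this
        omega
    have h1 := Tuple.unique_monotone hmono (Tuple.monotone_sort x)
    have h2 : σ = Tuple.sort x := by
      ext i
      exact congrArg _ (hx (congrFun h1 i))
    rw [h2]
  | succ N ih =>
    intro σ y hy hc hr h0 hN
    by_cases hl : y (Fin.last m) < n
    · have hval : ∀ i, y i = ((x (σ i) : ℕ) : ℤ) := by
        intro i
        have h1 : y i < n := lt_of_le_of_lt (hy.monotone (Fin.le_last i)) hl
        have h2 := hc i
        rw [← Int.cast_natCast (x (σ i) : ℕ), ZMod.intCast_eq_intCast_iff'] at h2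
        rw [Int.emod_eq_of_lt (h0 i) h1, Int.emod_eq_of_lt (by positivity)
          (by exact_mod_cast (x (σ i)).isLt)] at h2
        exact h2
      have hmono : Monotone (x ∘ σ) := by
        intro i j hij
        have := hy.monotone hij
        rw [hval, hval] at this
        exact_mod_cast this
      have h1 := Tuple.unique_monotone hmono (Tuple.monotone_sort x)
      have h2 : σ = Tuple.sort x := by
        ext i
        exact congrArg _ (hx (congrFun h1 i))
      rw [h2]
    · push Not at hl
      have key := ih (σ * (finRotate (m + 1))⁻¹)
        (Fin.cons (y (Fin.last m) - n) (fun i : Fin m => y i.castSucc)) ?_ ?_ ?_ ?_ ?_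
      · rw [← key, Equiv.Perm.sign_mul, Equiv.Perm.sign_inv, sign_finRotate]
        simp [hm.neg_one_pow]
      · intro i j hij
        refine Fin.cases ?_ (fun j => ?_) j hij
        · intro h; exact absurd h (Fin.not_lt_zero _)
        · refine Fin.cases ?_ (fun i => ?_) i
          · intro _
            have := hr (Fin.last m) j.castSucc
            simp only [Fin.cons_zero, Fin.cons_succ]
            omega
          · intro h
            simp only [Fin.cons_succ]
            exact hy (by simpa using h)
      · intro i
        refine Fin.cases ?_ (fun i => ?_) i
        · have : (finRotate (m + 1))⁻¹ 0 = Fin.last m := by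
            rw [Equiv.Perm.inv_eq_iff_eq, finRotate_last]
          rw [Equiv.Perm.mul_apply, this, ← hc, Fin.cons_zero]
          simp
        · have : (finRotate (m + 1))⁻¹ i.succ = i.castSucc := by
            rw [Equiv.Perm.inv_eq_iff_eq, finRotate_apply, Fin.coeSucc_eq_succ]
          rw [Equiv.Perm.mul_apply, this, ← hc, Fin.cons_succ]
      · intro i j
        refine Fin.cases ?_ (fun i => ?_) i <;> refine Fin.cases ?_ (fun j => ?_) j
        · simp; omega
        · simp only [Fin.cons_zero, Fin.cons_succ]
          have := hr (Fin.last m) j.castSucc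
          omega
        · simp only [Fin.cons_zero, Fin.cons_succ]
          have := hy (Fin.castSucc_lt_last i)
          omega
        · simp only [Fin.cons_succ]
          exact hr _ _
      · intro i
        refine Fin.cases ?_ (fun i => ?_) i
        · simp only [Fin.cons_zero]; omega
        · simp only [Fin.cons_succ]; exact h0 _
      · rw [Fin.sum_univ_succ]
        rw [Fin.sum_univ_castSucc] at hN
        simp only [Fin.cons_zero, Fin.cons_succ]
        push_cast at hN
        omega

/-- The linear order on representatives in `{0, …, n-1}` is a cyclic order, so on injective tuples of
odd length the cyclic sign is the sign of the sorting permutation. -/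
theorem cycSign_eq_sign_sort {n m : ℕ} (hn : 1 ≤ n) (hm : Even m) (x : Fin (m + 1) → Fin n)
    (hx : Function.Injective x) :
    cycSign n (fun j => ((x j : ℕ) : ZMod n)) = ((Equiv.Perm.sign (Tuple.sort x) : ℤˣ) : ℤ) := by
  have hex : ∃ σ : Equiv.Perm (Fin (m + 1)),
      InCyclicOrder n ((fun j => ((x j : ℕ) : ZMod n)) ∘ σ) := by
    refine ⟨Tuple.sort x, fun i => ((x (Tuple.sort x i) : ℕ) : ℤ), ?_, ?_, ?_⟩
    · intro i j hij
      have h1 : x (Tuple.sort x i) ≤ x (Tuple.sort x j) := Tuple.monotone_sort x hij.le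
      have h2 : x (Tuple.sort x i) ≠ x (Tuple.sort x j) := by
        intro h
        exact hij.ne ((Tuple.sort x).injective (hx h))
      show ((x (Tuple.sort x i) : ℕ) : ℤ) < ((x (Tuple.sort x j) : ℕ) : ℤ)
      exact_mod_cast lt_of_le_of_ne h1 h2
    · intro i; simp
    · intro i j
      have := (x (Tuple.sort x i)).isLt
      show ((x (Tuple.sort x i) : ℕ) : ℤ) < ((x (Tuple.sort x j) : ℕ) : ℤ) + n
      omega
  unfold cycSign
  rw [dif_pos hex]
  obtain ⟨y, hy, hc, hr⟩ := hex.choose_spec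
  -- Adding the multiple `|y 0| * n` of `n` makes the representatives nonnegative.
  have hz : ∀ i, 0 ≤ y i + |y 0| * n := by
    intro i
    have h1 := hy.monotone (Fin.zero_le i)
    have h2 := neg_abs_le (y 0)
    have h3 : |y 0| * 1 ≤ |y 0| * (n : ℤ) :=
      mul_le_mul_of_nonneg_left (by exact_mod_cast hn) (abs_nonneg _)
    linarith
  rw [sign_eq_of_cyclic hn hm x hx (∑ i, (y i + |y 0| * n)).toNat hex.choose
    (fun i => y i + |y 0| * n) (fun i j h => by simpa using hy h)
    (fun i => by have := hc i; simpa using this)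
    (fun i j => by have := hr i j; show y i + |y 0| * n < y j + |y 0| * n + n; linarith) hz
    (Int.self_le_toNat _)]

/-! ### From increasing `2k`-tuples to cyclic signs -/

open Classical in
/-- Pairs of an increasing `d`-tuple `f` and a value `i` outside its range correspond to pairs of an
increasing `(d+1)`-tuple `F` and a position `q`, with `F q = i` and `f` obtained from `F` by omitting
that position. Then `Fin.cons i f` is `F` precomposed with a cycle of sign `(-1)^q`. Pairs with `i`
in the range of `f` do not contribute, since `Φ` vanishes on non-injective tuples. -/
theorem sum_strictMono_cons {R : Type*} [AddCommMonoid R] {n d : ℕ}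
    (Φ : (Fin (d + 1) → Fin n) → R) (h0 : ∀ g, ¬ Function.Injective g → Φ g = 0) :
    ∑ f : Fin d → Fin n, (if StrictMono f then ∑ i : Fin n, Φ (Fin.cons i f) else 0)
      = ∑ F : Fin (d + 1) → Fin n,
          if StrictMono F then ∑ q : Fin (d + 1), Φ (F ∘ q.cycleRange.symm) else 0 := by
  rw [← Finset.sum_filter, ← Finset.sum_filter, ← Finset.sum_product', ← Finset.sum_product']
  have hcyc : ∀ (F : Fin (d + 1) → Fin n) (q : Fin (d + 1)),
      F ∘ q.cycleRange.symm = Fin.cons (F q) (F ∘ q.succAbove) := by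
    intro F q
    funext j
    refine Fin.cases ?_ (fun j => ?_) j
    · simp
    · simp [Fin.cycleRange_symm_succ]
  symm
  rw [← Finset.sum_filter_of_ne (s := (Finset.univ.filter fun f : Fin d → Fin n => StrictMono f)
    ×ˢ Finset.univ) (p := fun z => z.2 ∉ Set.range z.1)]
  · refine Finset.sum_bij (fun z _ => (z.1 ∘ z.2.succAbove, z.1 z.2)) ?_ ?_ ?_ ?_
    · rintro ⟨F, q⟩ hF
      simp only [Finset.mem_product, Finset.mem_filter, Finset.mem_univ, true_and,
        and_true] at hF ⊢
      refine ⟨hF.comp (Fin.strictMono_succAbove q), ?_⟩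
      rintro ⟨j, hj⟩
      exact Fin.succAbove_ne q j (hF.injective hj)
    · rintro ⟨F, q⟩ hF ⟨F', q'⟩ hF' h
      simp only [Finset.mem_product, Finset.mem_filter, Finset.mem_univ, true_and,
        and_true, Prod.mk.injEq] at hF hF' h
      obtain ⟨h1, h2⟩ := h
      have hr : ∀ (G : Fin (d + 1) → Fin n) (p : Fin (d + 1)),
          Set.range G = insert (G p) (Set.range (G ∘ p.succAbove)) := by
        intro G p
        ext v
        constructor
        · rintro ⟨j, rfl⟩
          rcases Fin.eq_self_or_eq_succAbove p j with h | ⟨l, h⟩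
          · left; rw [h]
          · right; exact ⟨l, by rw [h]; rfl⟩
        · rintro (h | ⟨l, h⟩)
          · exact ⟨p, h.symm⟩
          · exact ⟨_, h⟩
      have hFF : F = F' := by
        refine (StrictMono.range_inj hF hF').1 ?_
        rw [hr F q, hr F' q', h1, h2]
      subst hFF
      rw [hF.injective h2]
    · rintro ⟨f, i⟩ hf
      simp only [Finset.mem_product, Finset.mem_filter, Finset.mem_univ, true_and,
        and_true] at hf
      obtain ⟨hf, hi⟩ := hf
      have hi' : i ∉ Finset.univ.image f := by
        simpa using hi
      have hcard : (insert i (Finset.univ.image f)).card = d + 1 := by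
        rw [Finset.card_insert_of_notMem hi', Finset.card_image_of_injective _ hf.injective]
        simp
      set F := Finset.orderEmbOfFin _ hcard with hFdef
      have hrange : Set.range F = insert i (Set.range f) := by
        rw [hFdef, Finset.range_orderEmbOfFin]; simp
      obtain ⟨q, hq⟩ : i ∈ Set.range F := by rw [hrange]; exact Set.mem_insert _ _
      refine ⟨(F, q), ?_, ?_⟩
      · simp [F.strictMono]
      · have : (F ∘ q.succAbove) = f := by
          refine (StrictMono.range_inj (F.strictMono.comp (Fin.strictMono_succAbove q)) hf).1 ?_
          rw [Set.range_comp, Fin.range_succAbove, Set.image_compl_eq_range_sdiff_image F.injective,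
            hrange, Set.image_singleton, hq]
          simpa using hi
        simp [this, hq]
    · rintro ⟨F, q⟩ _
      simp only [hcyc]
  · rintro ⟨f, i⟩ _ hne hmem
    apply hne
    apply h0
    intro hinj
    obtain ⟨j, hj⟩ := hmem
    have : (Fin.cons i f : Fin (d + 1) → Fin n) 0 = (Fin.cons i f : Fin (d + 1) → Fin n) j.succ := by
      simpa using hj.symm
    exact absurd (hinj this) (Fin.succ_ne_zero j).symm

theorem sum_neg_one_pow_fin {m : ℕ} (hm : Even m) :
    ∑ q : Fin (m + 1), (-1 : ℝ) ^ (q : ℕ) = 1 := by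
  rw [Fin.sum_univ_eq_sum_range (fun q => (-1 : ℝ) ^ q), neg_one_geom_sum, if_neg]
  rw [Nat.even_add_one]; simpa using hm

/-- The determinant of the square matrix with rows the standard basis vectors `e_{h 0}, e_{h 1}, …`:
the sign of `h` if `h` is a permutation, and `0` otherwise. -/
noncomputable def selDet {d : ℕ} (h : Fin d → Fin d) : ℝ :=
  ((1 : Matrix (Fin d) (Fin d) ℝ).submatrix h id).det

theorem selDet_perm {d : ℕ} (σ : Equiv.Perm (Fin d)) :
    selDet σ = ((Equiv.Perm.sign σ : ℤˣ) : ℤ) := by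
  unfold selDet
  have := Matrix.det_permute σ (1 : Matrix (Fin d) (Fin d) ℝ)
  rw [this]; simp

theorem selDet_comp_perm {d : ℕ} (h : Fin d → Fin d) (σ : Equiv.Perm (Fin d)) :
    selDet (h ∘ σ) = ((Equiv.Perm.sign σ : ℤˣ) : ℤ) * selDet h := by
  unfold selDet
  have := Matrix.det_permute σ ((1 : Matrix (Fin d) (Fin d) ℝ).submatrix h id)
  rw [← this]; rfl

theorem selDet_eq_zero {d : ℕ} {h : Fin d → Fin d} (hh : ¬ Function.Injective h) :
    selDet h = 0 := by
  unfold selDet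
  simp only [Function.Injective, not_forall] at hh
  obtain ⟨i, j, h1, h2⟩ := hh
  refine Matrix.det_zero_of_row_eq h2 ?_
  funext c
  rw [Matrix.submatrix_apply, Matrix.submatrix_apply, h1]

open Classical in
/-- The combinatorial identity behind the theorem. Summing over the position `q` of the extra
entry contributes `∑ q, (-1)^q = 1`, leaving `∑ selDet (χ ∘ F)` over increasing `F` of length
`m + 1`; those `F` for which `χ ∘ F` is a permutation are the sorted forms of the tuples `x` with
`χ (x j) = j`, and `χ ∘ F` is then the sorting permutation of `x`. -/
theorem sum_selDet_eq {n m : ℕ} (hm : Even m) (hn : 1 ≤ n) (χ : Fin n → Fin (m + 1)) :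
    ∑ f : Fin m → Fin n, (if StrictMono f then
        ∑ i : Fin n, selDet (χ ∘ (Fin.cons i f : Fin (m + 1) → Fin n)) else 0)
      = ∑ x ∈ Finset.univ.filter (fun x : Fin (m + 1) → Fin n => χ ∘ x = id),
          (cycSign n (fun j => ((x j : ℕ) : ZMod n)) : ℝ) := by
  rw [sum_strictMono_cons (fun g => selDet (χ ∘ g))]
  swap
  · intro g hg
    exact selDet_eq_zero fun h => hg (Function.Injective.of_comp h)
  have h1 : ∀ F : Fin (m + 1) → Fin n,
      ∑ q : Fin (m + 1), selDet (χ ∘ (F ∘ q.cycleRange.symm)) = selDet (χ ∘ F) := by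
    intro F
    simp_rw [← Function.comp_assoc, selDet_comp_perm, Equiv.Perm.sign_symm, Fin.sign_cycleRange]
    rw [← Finset.sum_mul]
    have := sum_neg_one_pow_fin hm
    push_cast
    rw [this, one_mul]
  simp_rw [h1]
  rw [← Finset.sum_filter]
  rw [← Finset.sum_filter_of_ne (s := Finset.univ.filter fun F : Fin (m + 1) → Fin n => StrictMono F)
    (p := fun F => Function.Injective (χ ∘ F))
    (fun F _ hne => by by_contra h; exact hne (selDet_eq_zero h))]
  symm
  have hinj : ∀ x : Fin (m + 1) → Fin n, χ ∘ x = id → Function.Injective x := fun x hx =>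
    Function.Injective.of_comp (f := χ) (hx ▸ Function.injective_id)
  refine Finset.sum_bij (fun x _ => x ∘ Tuple.sort x) ?_ ?_ ?_ ?_
  · intro x hx
    simp only [Finset.mem_filter, Finset.mem_univ, true_and] at hx ⊢
    refine ⟨(Tuple.monotone_sort x).strictMono_of_injective
      ((hinj x hx).comp (Tuple.sort x).injective), ?_⟩
    rw [← Function.comp_assoc, hx]
    exact (Tuple.sort x).injective
  · intro x hx x' hx' h
    simp only [Finset.mem_filter, Finset.mem_univ, true_and] at hx hx'
    have h2 : Tuple.sort x = Tuple.sort x' := by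
      ext i
      have := congrArg (fun g => χ (g i)) h
      have e1 := congrFun hx (Tuple.sort x i)
      have e2 := congrFun hx' (Tuple.sort x' i)
      simp only [Function.comp_apply, id] at this e1 e2
      rw [e1, e2] at this
      rw [this]
    simp only [h2] at h
    exact (Tuple.sort x').surjective.injective_comp_right h
  · intro F hF
    simp only [Finset.mem_filter, Finset.mem_univ, true_and] at hF
    obtain ⟨hF, hi⟩ := hF
    let τ : Equiv.Perm (Fin (m + 1)) := Equiv.ofBijective _ (Finite.injective_iff_bijective.1 hi)
    have hτ : ∀ i, τ i = χ (F i) := fun i => rfl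
    have hx : χ ∘ (F ∘ τ.symm) = id := by
      funext j
      simp [← hτ]
    refine ⟨F ∘ τ.symm, by simp [hx], ?_⟩
    have : (F ∘ τ.symm) ∘ τ = F := by funext j; simp
    rw [Tuple.unique_monotone (Tuple.monotone_sort (F ∘ τ.symm)) (τ := τ) (by rw [this]; exact hF.monotone), this]
  · intro x hx
    simp only [Finset.mem_filter, Finset.mem_univ, true_and] at hx
    rw [cycSign_eq_sign_sort hn hm x (hinj x hx), ← Function.comp_assoc, hx, Function.id_comp,
      selDet_perm]

/-! ### The integral of a power of a linear form over the ordered simplex -/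

/-- The ordered simplex `1 ≥ t₁ ≥ ⋯ ≥ t_d ≥ 0`. -/
def ordSimplex (d : ℕ) : Set (Fin d → ℝ) :=
  {t | Antitone t ∧ (∀ m, 0 ≤ t m) ∧ ∀ m, t m ≤ 1}

theorem isClosed_ordSimplex (d : ℕ) : IsClosed (ordSimplex d) := by
  have : ordSimplex d = (⋂ i : Fin d, ⋂ j : Fin d, ⋂ _ : i ≤ j, {t : Fin d → ℝ | t j ≤ t i}) ∩
      ((⋂ i : Fin d, {t : Fin d → ℝ | 0 ≤ t i}) ∩ ⋂ i : Fin d, {t : Fin d → ℝ | t i ≤ 1}) := by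
    ext t
    simp [ordSimplex, Antitone]
  rw [this]
  refine IsClosed.inter ?_ (IsClosed.inter ?_ ?_)
  · exact isClosed_iInter fun i => isClosed_iInter fun j => isClosed_iInter fun _ =>
      isClosed_le (continuous_apply _) (continuous_apply _)
  · exact isClosed_iInter fun i => isClosed_le continuous_const (continuous_apply _)
  · exact isClosed_iInter fun i => isClosed_le (continuous_apply _) continuous_const

/-- The slice of the ordered simplex at first coordinate `s > 0` is `s` times the simplex of one
dimension less. -/
theorem cons_smul_mem_ordSimplex {d : ℕ} {s : ℝ} (hs : 0 < s) (v : Fin d → ℝ) :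
    (Fin.cons s (s • v) : Fin (d + 1) → ℝ) ∈ ordSimplex (d + 1) ↔ s ≤ 1 ∧ v ∈ ordSimplex d := by
  constructor
  · rintro ⟨h1, h2, h3⟩
    refine ⟨by simpa using h3 0, ?_, ?_, ?_⟩
    · intro i j hij
      have := h1 (Fin.succ_le_succ_iff.2 hij)
      simpa [hs] using this
    · intro i
      have := h2 i.succ
      simpa [hs] using this
    · intro i
      have := h1 (Fin.zero_le i.succ)
      simpa [hs] using this
  · rintro ⟨hs1, h1, h2, h3⟩
    refine ⟨?_, ?_, ?_⟩
    · intro i j hij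
      refine Fin.cases ?_ (fun i => ?_) i hij
      · refine Fin.cases ?_ (fun j => ?_) j
        · simp
        · intro _
          simpa [hs] using h3 j
      · refine Fin.cases ?_ (fun j => ?_) j
        · intro h; exact absurd h (by simp)
        · intro h
          simpa [hs] using h1 (Fin.succ_le_succ_iff.1 h)
    · intro i
      refine Fin.cases ?_ (fun i => ?_) i
      · simpa using hs.le
      · simpa [hs] using h2 i
    · intro i
      refine Fin.cases ?_ (fun i => ?_) i
      · simpa using hs1
      · simpa using mul_le_one₀ hs1 (h2 i) (h3 i)

theorem lintegral_comp_smul_pi {d : ℕ} (f : (Fin d → ℝ) → ENNReal) {s : ℝ} (hs : 0 < s) :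
    ∫⁻ u, f u = ENNReal.ofReal (s ^ d) * ∫⁻ v, f (s • v) := by
  have h := Measure.map_addHaar_smul (volume : Measure (Fin d → ℝ)) hs.ne'
  have hm : ∫⁻ v, f (s • v) = ∫⁻ u, f u ∂(Measure.map (s • ·) (volume : Measure (Fin d → ℝ))) :=
    ((Homeomorph.smulOfNeZero s hs.ne').toMeasurableEquiv.measurableEmbedding.lintegral_map f).symm
  rw [hm, h, lintegral_smul_measure, smul_eq_mul, ← mul_assoc, ← ENNReal.ofReal_mul (by positivity)]
  simp only [Module.finrank_fintype_fun_eq_card, Fintype.card_fin]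
  rw [abs_of_pos (by positivity), mul_inv_cancel₀ (by positivity)]
  simp

/-- The radial integral, with primitive `((d + 1) A)⁻¹ (s / (A + s B)) ^ (d + 1)`. -/
theorem lintegral_radial_s8 {A B : ℝ} (hA : 0 < A) (hB : 0 ≤ B) (d : ℕ) :
    ∫⁻ s in Set.Ioc (0 : ℝ) 1, ENNReal.ofReal (s ^ d * ((A + s * B) ^ (d + 2))⁻¹)
      = ENNReal.ofReal (((d + 1) * A)⁻¹ * ((A + B) ^ (d + 1))⁻¹) := by
  have hpos : ∀ s ∈ Set.Icc (0 : ℝ) 1, 0 < A + s * B := fun s hs => by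
    have := mul_nonneg hs.1 hB
    linarith
  have hcont : ContinuousOn (fun s : ℝ => s ^ d * ((A + s * B) ^ (d + 2))⁻¹) (Set.Icc 0 1) := by
    refine ContinuousOn.mul (by fun_prop) (ContinuousOn.inv₀ (by fun_prop) ?_)
    intro s hs
    exact pow_ne_zero _ (hpos s hs).ne'
  have hint : IntervalIntegrable (fun s : ℝ => s ^ d * ((A + s * B) ^ (d + 2))⁻¹) volume 0 1 := by
    apply ContinuousOn.intervalIntegrable
    rwa [Set.uIcc_of_le zero_le_one]
  rw [← ofReal_integral_eq_lintegral_ofReal]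
  · rw [← intervalIntegral.integral_of_le zero_le_one]
    congr 1
    have hder : ∀ s ∈ Set.uIcc (0 : ℝ) 1, HasDerivAt
        (fun s : ℝ => ((d + 1) * A)⁻¹ * (s / (A + s * B)) ^ (d + 1))
        (s ^ d * ((A + s * B) ^ (d + 2))⁻¹) s := by
      intro s hs
      rw [Set.uIcc_of_le zero_le_one] at hs
      have hp := hpos s hs
      have h1 : HasDerivAt (fun s : ℝ => A + s * B) B s := by
        simpa using ((hasDerivAt_id s).mul_const B).const_add A
      have h2 := (((hasDerivAt_id s).div h1 hp.ne').pow (d + 1)).const_mul ((d + 1) * A)⁻¹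
      refine h2.congr_deriv ?_
      simp only [id, Nat.add_sub_cancel, Pi.div_apply, Nat.cast_add, Nat.cast_one]
      have : (A + s * B) ≠ 0 := hp.ne'
      have : (d + 1 : ℝ) ≠ 0 := by positivity
      simp only [div_pow]
      field_simp
      ring
    rw [intervalIntegral.integral_eq_sub_of_hasDerivAt hder hint]
    simp
  · exact (intervalIntegrable_iff_integrableOn_Ioc_of_le zero_le_one).1 hint
  · refine (ae_restrict_iff' measurableSet_Ioc).2 (Filter.Eventually.of_forall fun s hs => ?_)
    have := hpos s ⟨hs.1.le, hs.2⟩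
    have := hs.1
    show 0 ≤ s ^ d * ((A + s * B) ^ (d + 2))⁻¹
    positivity

/-- Induction on `d`: rescale the remaining coordinates by the first coordinate `s` and integrate over
`s` first. This yields the factor `((d + 1) A)⁻¹` and the same integral in dimension one less, with
`A` replaced by `A + a 0`. No `a i` appears in a denominator on its own, so `a i = 0` needs no
separate treatment. The lower integral is used so that Tonelli applies without integrability. -/
theorem lintegral_ordSimplex (d : ℕ) : ∀ (A : ℝ) (a : Fin d → ℝ), 0 < A → (∀ i, 0 ≤ a i) →
    ∫⁻ t in ordSimplex d, ENNReal.ofReal (((A + ∑ i, a i * t i) ^ (d + 1))⁻¹)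
      = ENNReal.ofReal (((d.factorial : ℝ) *
          ∏ j : Fin (d + 1), (A + ∑ i : Fin d, if i.castSucc < j then a i else 0))⁻¹) := by
  induction d with
  | zero =>
    intro A a hA ha
    have : ordSimplex 0 = Set.univ := by
      ext t; simp [ordSimplex, Antitone]
    simp [this, Measure.volume_pi_eq_dirac (0 : Fin 0 → ℝ)]
  | succ d ih =>
    intro A a hA ha
    have hms : MeasurableSet (ordSimplex (d + 1)) := (isClosed_ordSimplex _).measurableSet
    have hms' : MeasurableSet (ordSimplex d) := (isClosed_ordSimplex _).measurableSet
    set G : (Fin (d + 1) → ℝ) → ENNReal := (ordSimplex (d + 1)).indicator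
      (fun t => ENNReal.ofReal (((A + ∑ i, a i * t i) ^ (d + 1 + 1))⁻¹)) with hG
    have hGm : Measurable G := by
      refine Measurable.indicator ?_ hms
      fun_prop
    rw [← lintegral_indicator hms]
    have hmp := (volume_preserving_piFinSuccAbove (fun _ : Fin (d + 1) => ℝ) 0).symm
    rw [← hmp.lintegral_comp hGm, Measure.volume_eq_prod, lintegral_prod]
    swap
    · exact (hGm.comp (MeasurableEquiv.measurable _)).aemeasurable
    have hcons : ∀ (s : ℝ) (u : Fin d → ℝ),
        (MeasurableEquiv.piFinSuccAbove (fun _ : Fin (d + 1) => ℝ) 0).symm (s, u)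
          = (Fin.cons s u : Fin (d + 1) → ℝ) := by
      intro s u
      simp [MeasurableEquiv.piFinSuccAbove, Fin.insertNthEquiv]
    simp_rw [hcons]
    -- On the slice at height `s`, the substitution `u = s • v` has Jacobian `s ^ d`.
    have hinner : ∀ᵐ s : ℝ, ∫⁻ u : Fin d → ℝ, G (Fin.cons s u) =
        (Set.Ioc (0 : ℝ) 1).indicator (fun s => ∫⁻ v in ordSimplex d, ENNReal.ofReal
          (s ^ d * ((A + s * (a 0 + ∑ i, a i.succ * v i)) ^ (d + 2))⁻¹)) s := by
      have hae : ∀ᵐ s : ℝ, s ≠ 0 := by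
        simp [ae_iff]
      filter_upwards [hae] with s hs0
      rcases lt_or_gt_of_ne hs0 with hs | hs
      · rw [Set.indicator_of_notMem (by simp [hs.le])]
        rw [lintegral_eq_zero_iff' (by fun_prop)]
        refine Filter.Eventually.of_forall fun u => ?_
        refine Set.indicator_of_notMem ?_ _
        rintro ⟨_, h2, _⟩
        have := h2 0
        simp at this
        linarith
      · rw [lintegral_comp_smul_pi _ hs]
        by_cases hs1 : s ≤ 1
        · rw [Set.indicator_of_mem (show s ∈ Set.Ioc (0 : ℝ) 1 from ⟨hs, hs1⟩),
            ← lintegral_indicator hms', ← lintegral_const_mul' _ _ ENNReal.ofReal_ne_top]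
          congr 1
          funext v
          by_cases hv : v ∈ ordSimplex d
          · rw [Set.indicator_of_mem hv, hG,
              Set.indicator_of_mem ((cons_smul_mem_ordSimplex hs v).2 ⟨hs1, hv⟩),
              ← ENNReal.ofReal_mul (by positivity)]
            congr 4
            rw [Fin.sum_univ_succ]
            simp only [Fin.cons_zero, Fin.cons_succ, Pi.smul_apply, smul_eq_mul]
            rw [mul_add, Finset.mul_sum, mul_comm s (a 0)]
            congr 2
            refine Finset.sum_congr rfl fun i _ => by ring
          · rw [Set.indicator_of_notMem hv, hG, Set.indicator_of_notMem
              (fun h => hv ((cons_smul_mem_ordSimplex hs v).1 h).2), mul_zero]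
        · rw [Set.indicator_of_notMem (fun h => hs1 h.2)]
          have : ∀ v : Fin d → ℝ, G (Fin.cons s (s • v)) = 0 := fun v =>
            Set.indicator_of_notMem (fun h => hs1 ((cons_smul_mem_ordSimplex hs v).1 h).1) _
          simp [this]
    rw [lintegral_congr_ae hinner, lintegral_indicator measurableSet_Ioc, lintegral_lintegral_swap]
    swap
    · refine Measurable.aemeasurable ?_
      simp only [Function.uncurry_def]
      fun_prop
    have h2 : ∀ v ∈ ordSimplex d,
        ∫⁻ s in Set.Ioc (0 : ℝ) 1, ENNReal.ofReal
          (s ^ d * ((A + s * (a 0 + ∑ i, a i.succ * v i)) ^ (d + 2))⁻¹)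
        = ENNReal.ofReal (((d + 1) * A)⁻¹) *
          ENNReal.ofReal (((A + a 0 + ∑ i, a i.succ * v i) ^ (d + 1))⁻¹) := by
      intro v hv
      rw [lintegral_radial_s8 hA, ← ENNReal.ofReal_mul (by positivity), add_assoc]
      exact add_nonneg (ha 0) (Finset.sum_nonneg fun i _ => mul_nonneg (ha _) (hv.2.1 i))
    rw [setLIntegral_congr_fun hms' h2, lintegral_const_mul' _ _ ENNReal.ofReal_ne_top,
      ih (A + a 0) (fun i => a i.succ) (by have := ha 0; linarith) (fun i => ha _),
      ← ENNReal.ofReal_mul (by positivity), ← mul_inv]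
    congr 2
    rw [Fin.prod_univ_succ (n := d + 1)]
    have h3 : ∀ j : Fin (d + 1),
        (A + ∑ i : Fin (d + 1), if i.castSucc < j.succ then a i else 0) =
        A + a 0 + ∑ i : Fin d, if i.castSucc < j then a i.succ else 0 := by
      intro j
      rw [Fin.sum_univ_succ]
      simp only [Fin.castSucc_zero, Fin.succ_pos, if_true, ← Fin.succ_castSucc,
        Fin.succ_lt_succ_iff, add_assoc]
    simp_rw [h3]
    simp [Nat.factorial_succ]
    ring

theorem integral_ordSimplex (d : ℕ) (A : ℝ) (a : Fin d → ℝ) (hA : 0 < A) (ha : ∀ i, 0 ≤ a i) :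
    ∫ t in ordSimplex d, ((A + ∑ i, a i * t i) ^ (d + 1))⁻¹
      = ((d.factorial : ℝ) *
          ∏ j : Fin (d + 1), (A + ∑ i : Fin d, if i.castSucc < j then a i else 0))⁻¹ := by
  have hms := (isClosed_ordSimplex d).measurableSet
  rw [integral_eq_lintegral_of_nonneg_ae, lintegral_ordSimplex d A a hA ha, ENNReal.toReal_ofReal]
  · have : ∀ j : Fin (d + 1), 0 ≤ A + ∑ i : Fin d, if i.castSucc < j then a i else 0 := fun j =>
      add_nonneg hA.le (Finset.sum_nonneg fun i _ => by split_ifs <;> simp [ha])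
    exact inv_nonneg.2 (mul_nonneg (by positivity) (Finset.prod_nonneg fun j _ => this j))
  · refine (ae_restrict_iff' hms).2 (Filter.Eventually.of_forall fun t ht => ?_)
    have : 0 ≤ A + ∑ i, a i * t i :=
      add_nonneg hA.le (Finset.sum_nonneg fun i _ => mul_nonneg (ha _) (ht.2.1 i))
    show 0 ≤ ((A + ∑ i, a i * t i) ^ (d + 1))⁻¹
    positivity
  · exact Measurable.aestronglyMeasurable (by fun_prop)

/-! ### The Jacobian determinants of the weights -/

/-- The vector `(t₀, t₁, …, t_d)` with `t₀ = 1`. -/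
noncomputable def homog {d : ℕ} (t : Fin d → ℝ) : Fin (d + 1) → ℝ :=
  Fin.cons 1 t

/-- The quotient rule, valid where the total mass `M(t)` is nonzero. -/
theorem fderiv_cycWeightPow {n k : ℕ} (a : Fin (2 * k + 1) → ℕ) (χ : Fin n → Fin (2 * k + 1))
    (i : Fin n) (t : Fin (2 * k) → ℝ) (m : Fin (2 * k))
    (hM : (a 0 : ℝ) + ∑ j : Fin (2 * k), (a j.succ : ℝ) * t j ≠ 0) :
    fderiv ℝ (cycWeightPow n k a χ i) t (Pi.single m 1) =
      (if χ i = m.succ then 1 else 0) / ((a 0 : ℝ) + ∑ j : Fin (2 * k), (a j.succ : ℝ) * t j)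
        - homog t (χ i) * a m.succ /
          ((a 0 : ℝ) + ∑ j : Fin (2 * k), (a j.succ : ℝ) * t j) ^ 2 := by
  set M : ℝ := (a 0 : ℝ) + ∑ j : Fin (2 * k), (a j.succ : ℝ) * t j with hMd
  have hnum : HasFDerivAt (fun t : Fin (2 * k) → ℝ => homog t (χ i))
      (Fin.cases (motive := fun _ => (Fin (2 * k) → ℝ) →L[ℝ] ℝ) 0
        (fun j => ContinuousLinearMap.proj j) (χ i)) t := by
    refine Fin.cases ?_ (fun j => ?_) (χ i)
    · simpa [homog] using hasFDerivAt_const (1 : ℝ) t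
    · simpa [homog] using hasFDerivAt_apply j t
  have hden : HasFDerivAt (fun t : Fin (2 * k) → ℝ =>
      (a 0 : ℝ) + ∑ j : Fin (2 * k), (a j.succ : ℝ) * t j)
      (∑ j : Fin (2 * k), (a j.succ : ℝ) •
        (ContinuousLinearMap.proj j : (Fin (2 * k) → ℝ) →L[ℝ] ℝ)) t := by
    refine HasFDerivAt.const_add _ (HasFDerivAt.fun_sum fun j _ => ?_)
    exact (hasFDerivAt_apply j t).const_mul _
  have hline : HasDerivAt (fun s : ℝ => cycWeightPow n k a χ i (t + s • Pi.single m 1))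
      ((if χ i = m.succ then 1 else 0) / M - homog t (χ i) * a m.succ / M ^ 2) 0 := by
    have hn0 := hnum.hasLineDerivAt (Pi.single m 1)
    have hd0 := hden.hasLineDerivAt (Pi.single m 1)
    unfold HasLineDerivAt at hn0 hd0
    have := hn0.fun_div hd0 (by simpa using hM)
    refine this.congr_deriv ?_
    have e1 : (Fin.cases (motive := fun _ => (Fin (2 * k) → ℝ) →L[ℝ] ℝ) 0
        (fun j => ContinuousLinearMap.proj j) (χ i)) (Pi.single m (1 : ℝ)) =
        if χ i = m.succ then 1 else 0 := by
      refine Fin.cases ?_ (fun j => ?_) (χ i)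
      · simp [(Fin.succ_ne_zero m).symm]
      · simp [Pi.single_apply]
    rw [e1]
    simp only [zero_smul, add_zero, sum_apply, smul_apply,
      ContinuousLinearMap.proj_apply, smul_eq_mul, Pi.single_apply, mul_ite, mul_one, mul_zero,
      Finset.sum_ite_eq', Finset.mem_univ, if_true, ← hMd]
    field_simp
  have hdiff : DifferentiableAt ℝ (cycWeightPow n k a χ i) t :=
    hnum.differentiableAt.fun_mul (hden.differentiableAt.fun_inv hM)
  exact (hdiff.hasFDerivAt.hasLineDerivAt _).unique hline

/-- A Jacobian determinant of the weights as a bordered determinant `det N`, where `N` has first row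
`a` and the other rows standard basis vectors. Let `L` have columns `(1, t)` and `e_m / M`, and let
`U` be the column operation for which `L * U` has columns `(1, t)` and the partial derivatives of the
weights. Total mass one gives `N * (L * U)` the first row `(M, 0, …, 0)`, so its determinant is `M`
times the Jacobian, while `det L = M ^ (-d)` and `det U = 1`. -/
theorem det_jacobian_eq {d : ℕ} (a : Fin (d + 1) → ℝ) (t : Fin d → ℝ) (g : Fin d → Fin (d + 1))
    (M : ℝ) (hM : M = a 0 + ∑ j : Fin d, a j.succ * t j) (hM0 : M ≠ 0) :
    (Matrix.of fun l m : Fin d =>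
      (if g l = m.succ then 1 else 0) / M - homog t (g l) * a m.succ / M ^ 2).det
      = (M ^ (d + 1))⁻¹ * (Matrix.of (Fin.cons a fun l => Pi.single (g l) 1)).det := by
  set N : Matrix (Fin (d + 1)) (Fin (d + 1)) ℝ := Matrix.of (Fin.cons a fun l => Pi.single (g l) 1)
    with hN
  set L : Matrix (Fin (d + 1)) (Fin (d + 1)) ℝ := Matrix.of fun p =>
    Fin.cons (homog t p) (fun m : Fin d => (if p = m.succ then 1 else 0) / M) with hL
  set U : Matrix (Fin (d + 1)) (Fin (d + 1)) ℝ := Matrix.of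
    (Fin.cons (Fin.cons 1 fun m : Fin d => - a m.succ / M ^ 2)
      (fun l : Fin d => Fin.cons 0 fun m => if l = m then 1 else 0)) with hU
  have hat : ∑ p, a p * homog t p = M := by
    rw [Fin.sum_univ_succ, hM]; simp [homog]
  have hLdet : L.det = (M ^ d)⁻¹ := by
    rw [Matrix.det_of_isLowerTriangular, Fin.prod_univ_succ]
    · simp [hL, homog]
    · intro i j hij
      have hij : i < j := hij
      obtain ⟨j, rfl⟩ := Fin.exists_succ_eq.2 (Fin.ne_zero_of_lt hij)
      simp [hL, hij.ne]
  have hUdet : U.det = 1 := by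
    rw [Matrix.det_of_isUpperTriangular, Fin.prod_univ_succ]
    · simp [hU]
    · intro i j hij
      have hij : j < i := hij
      obtain ⟨i, rfl⟩ := Fin.exists_succ_eq.2 (Fin.ne_zero_of_lt hij)
      refine Fin.cases ?_ (fun j hij => ?_) j hij
      · simp [hU]
      · have : i ≠ j := fun h => by simp [h] at hij
        simp [hU, this]
  have hLU : ∀ p, (L * U) p = Fin.cons (homog t p) (fun m : Fin d =>
      (if p = m.succ then 1 else 0) / M - homog t p * a m.succ / M ^ 2) := by
    intro p
    funext q
    rw [Matrix.mul_apply, Fin.sum_univ_succ]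
    refine Fin.cases ?_ (fun m => ?_) q
    · simp [hL, hU]
    · simp [hL, hU]; ring
  have hprod : (N * (L * U)).det = M * (Matrix.of fun l m : Fin d =>
      (if g l = m.succ then 1 else 0) / M - homog t (g l) * a m.succ / M ^ 2).det := by
    have hrow0 : (N * (L * U)) 0 0 = M := by
      rw [Matrix.mul_apply, ← hat]
      exact Finset.sum_congr rfl fun p _ => by rw [hLU]; simp [hN]
    have hrow : ∀ m : Fin d, (N * (L * U)) 0 m.succ = 0 := by
      intro m
      rw [Matrix.mul_apply]
      have : ∀ p, N 0 p * (L * U) p m.succ = (if p = m.succ then a p / M else 0)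
          - (a p * homog t p) * (a m.succ / M ^ 2) := by
        intro p
        rw [hLU]; simp only [hN, Matrix.of_apply, Fin.cons_zero, Fin.cons_succ]
        split_ifs <;> ring
      simp_rw [this]
      rw [Finset.sum_sub_distrib, ← Finset.sum_mul, hat]
      simp only [Finset.sum_ite_eq', Finset.mem_univ, if_true]
      field_simp
      ring
    have hsub : ∀ (l : Fin d) q, (N * (L * U)) l.succ q = (L * U) (g l) q := by
      intro l q
      rw [Matrix.mul_apply]
      simp [hN, Pi.single_apply]
    rw [Matrix.det_succ_row_zero, Fin.sum_univ_succ]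
    simp only [hrow, mul_zero, zero_mul, Finset.sum_const_zero, add_zero, hrow0, Fin.val_zero,
      pow_zero, one_mul]
    congr 2
    ext l m
    simp [Matrix.submatrix_apply, hsub, hLU]
  rw [Matrix.det_mul, Matrix.det_mul, hLdet, hUdet] at hprod
  have : (M ^ (d + 1))⁻¹ * N.det = M⁻¹ * (N.det * ((M ^ d)⁻¹ * 1)) := by
    rw [pow_succ, mul_inv]; ring
  rw [this, hprod, ← mul_assoc, inv_mul_cancel₀ hM0, one_mul]

/-- The first row `a` of the bordered matrix is the sum of the basis vectors `e_{χ i}`, and the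
determinant is linear in that row. -/
theorem det_bordered_eq_sum {n d : ℕ} (χ : Fin n → Fin (d + 1)) (a : Fin (d + 1) → ℝ)
    (ha : ∀ p, a p = ∑ i, if χ i = p then 1 else 0) (f : Fin d → Fin n) :
    (Matrix.of (Fin.cons a fun l => Pi.single (χ (f l)) 1) :
      Matrix (Fin (d + 1)) (Fin (d + 1)) ℝ).det
      = ∑ i : Fin n, selDet (χ ∘ (Fin.cons i f : Fin (d + 1) → Fin n)) := by
  have hrow : a = ∑ i : Fin n, Pi.single (χ i) (1 : ℝ) := by
    funext p
    rw [ha, Finset.sum_apply]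
    exact Finset.sum_congr rfl fun i _ => by simp [Pi.single_apply, eq_comm]
  let B : Matrix (Fin (d + 1)) (Fin (d + 1)) ℝ :=
    Matrix.of (Fin.cons 0 fun l => Pi.single (χ (f l)) 1)
  have hupd : ∀ v : Fin (d + 1) → ℝ,
      (Matrix.of (Fin.cons v fun l => Pi.single (χ (f l)) 1) :
        Matrix (Fin (d + 1)) (Fin (d + 1)) ℝ) = B.updateRow 0 v := by
    intro v
    ext p q
    refine Fin.cases ?_ (fun l => ?_) p
    · simp [B]
    · simp [B, Matrix.updateRow_apply]
  rw [hupd, hrow]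
  have hlin : (B.updateRow 0 (∑ i : Fin n, Pi.single (χ i) (1 : ℝ))).det =
      ∑ i : Fin n, (B.updateRow 0 (Pi.single (χ i) (1 : ℝ))).det := by
    exact Matrix.detRowAlternating.toMultilinearMap.map_update_sum Finset.univ 0 _ B
  rw [hlin]
  refine Finset.sum_congr rfl fun i _ => ?_
  rw [← hupd]
  unfold selDet
  congr 1
  ext p q
  refine Fin.cases ?_ (fun l => ?_) p
  · simp [Matrix.one_apply, Pi.single_apply, eq_comm]
  · simp [Matrix.one_apply, Pi.single_apply, eq_comm]

open Classical in
/-- The integral of the `k`-th power of the curvature form over a `2k`-simplex of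
cyclic weight systems equals the cyclic set cocycle (after cancelling the common
factor `(-1)^k k!`): the integral over `1 ≥ t₁ ≥ ⋯ ≥ t_{2k} ≥ 0` of the sum over
increasing `2k`-tuples of Jacobian determinants of the weights equals
`(1/((2k)! |C_0|⋯|C_{2k}|)) Σ sgn_c(x_0,…,x_{2k})`, the sum over tuples with
`x_0 ∈ C_0`, `x_j ∈ C_j \ C_{j-1}`. -/
theorem curvature_power_integral_eq_cyclic_cocycle (k n : ℕ) (hk : 1 ≤ k) (hn : 1 ≤ n)
    (χ : Fin n → Fin (2 * k + 1)) (a : Fin (2 * k + 1) → ℕ)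
    (hfib : ∀ j, (Finset.univ.filter fun i => χ i = j).card = a j)
    (ha0 : 1 ≤ a 0) :
    (∫ t : Fin (2 * k) → ℝ in
        {t : Fin (2 * k) → ℝ | Antitone t ∧ (∀ m, 0 ≤ t m) ∧ ∀ m, t m ≤ 1},
        ∑ f : Fin (2 * k) → Fin n,
          if StrictMono f then
            Matrix.det (Matrix.of fun l m : Fin (2 * k) =>
              fderiv ℝ (cycWeightPow n k a χ (f l)) t (Pi.single m 1))
          else 0)
      = (1 / ((Nat.factorial (2 * k) : ℝ) *
            ∏ j : Fin (2 * k + 1), ((Finset.univ.filter fun i => χ i ≤ j).card : ℝ))) *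
          ∑ x ∈ Fintype.piFinset
              (Fin.cases (Finset.univ.filter fun i => χ i ≤ 0)
                (fun j => (Finset.univ.filter fun i => χ i ≤ j.succ) \
                  (Finset.univ.filter fun i => χ i ≤ j.castSucc)) :
                ∀ _ : Fin (2 * k + 1), Finset (Fin n)),
            (cycSign n (fun j => ((x j : ℕ) : ZMod n)) : ℝ) := by
  set c : ℝ := ((Nat.factorial (2 * k) : ℝ) *
    ∏ j : Fin (2 * k + 1), ((Finset.univ.filter fun i => χ i ≤ j).card : ℝ)) with hc
  have ha0' : (0 : ℝ) < a 0 := by exact_mod_cast ha0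
  have haR : ∀ p, (a p : ℝ) = ∑ i, if χ i = p then 1 else 0 := by
    intro p
    rw [← hfib p]
    simp
  set S : ℝ := ∑ f : Fin (2 * k) → Fin n, (if StrictMono f then
    ∑ i : Fin n, selDet (χ ∘ (Fin.cons i f : Fin (2 * k + 1) → Fin n)) else 0) with hS
  have hint : ∀ t ∈ ordSimplex (2 * k),
      (∑ f : Fin (2 * k) → Fin n,
          if StrictMono f then
            Matrix.det (Matrix.of fun l m : Fin (2 * k) =>
              fderiv ℝ (cycWeightPow n k a χ (f l)) t (Pi.single m 1))
          else 0)
        = (((a 0 : ℝ) + ∑ j : Fin (2 * k), (a j.succ : ℝ) * t j) ^ (2 * k + 1))⁻¹ * S := by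
    intro t ht
    have hM : (a 0 : ℝ) + ∑ j : Fin (2 * k), (a j.succ : ℝ) * t j ≠ 0 := by
      have : 0 ≤ ∑ j : Fin (2 * k), (a j.succ : ℝ) * t j :=
        Finset.sum_nonneg fun j _ => mul_nonneg (by positivity) (ht.2.1 j)
      positivity
    rw [hS, Finset.mul_sum]
    refine Finset.sum_congr rfl fun f _ => ?_
    split_ifs with hf
    · simp_rw [fderiv_cycWeightPow a χ _ t _ hM]
      rw [← det_bordered_eq_sum χ (fun p => (a p : ℝ)) haR f,
        ← det_jacobian_eq (fun p => (a p : ℝ)) t (fun l => χ (f l)) _ rfl hM]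
    · rw [mul_zero]
  have hset : {t : Fin (2 * k) → ℝ | Antitone t ∧ (∀ m, 0 ≤ t m) ∧ ∀ m, t m ≤ 1}
      = ordSimplex (2 * k) := rfl
  rw [hset, setIntegral_congr_fun (isClosed_ordSimplex _).measurableSet hint,
    integral_mul_const, integral_ordSimplex (2 * k) (a 0) (fun j => (a j.succ : ℝ)) ha0'
      (fun i => by positivity)]
  have hcard : ∀ j : Fin (2 * k + 1), ((Finset.univ.filter fun i => χ i ≤ j).card : ℝ) =
      (a 0 : ℝ) + ∑ i : Fin (2 * k), if i.castSucc < j then (a i.succ : ℝ) else 0 := by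
    intro j
    have h1 : ((Finset.univ.filter fun i => χ i ≤ j).card : ℝ) =
        ∑ p : Fin (2 * k + 1), if p ≤ j then (a p : ℝ) else 0 := by
      simp_rw [haR]
      rw [Finset.card_filter, Nat.cast_sum]
      have : ∀ p : Fin (2 * k + 1), (if p ≤ j then ∑ i, (if χ i = p then (1 : ℝ) else 0) else 0)
          = ∑ i, if χ i = p then (if χ i ≤ j then (1 : ℝ) else 0) else 0 := by
        intro p
        by_cases hp : p ≤ j
        · rw [if_pos hp]
          refine Finset.sum_congr rfl fun i _ => ?_
          by_cases h : χ i = p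
          · simp [h, hp]
          · simp [h]
        · rw [if_neg hp]
          refine (Finset.sum_eq_zero fun i _ => ?_).symm
          by_cases h : χ i = p
          · simp [h, hp]
          · simp [h]
      simp_rw [this]
      rw [Finset.sum_comm]
      simp
    -- The summand `p = 0` is `a 0`, and `i.succ ≤ j` means `i.castSucc < j`.
    rw [h1, Fin.sum_univ_succ]
    simp [Fin.castSucc_lt_iff_succ_le]
  have hc' : ((2 * k).factorial : ℝ) * ∏ j : Fin (2 * k + 1),
      ((a 0 : ℝ) + ∑ i : Fin (2 * k), if i.castSucc < j then (a i.succ : ℝ) else 0) = c := by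
    rw [hc]
    simp_rw [hcard]
  rw [hc', one_div]
  congr 1
  rw [hS, sum_selDet_eq (even_two_mul k) hn χ]
  refine Finset.sum_congr ?_ fun _ _ => rfl
  ext x
  simp only [Finset.mem_filter, Finset.mem_univ, true_and, Fintype.mem_piFinset,
    Fin.forall_fin_succ (n := 2 * k), Fin.cases_zero, Fin.cases_succ, Finset.mem_sdiff, not_le,
    funext_iff, Function.comp_apply, id]
  refine and_congr Fin.le_zero_iff.symm (forall_congr' fun j => ?_)
  rw [Fin.castSucc_lt_iff_succ_le, le_antisymm_iff]
end

section
/- Let R be a commutative ring, M an R-module, and m_1, …, m_n elements of M, with α_i denoting the image of m_i in the exterior algebra Λ(M) under the canonical inclusion. Then for every integer k ≥ 0, (Σ_{1 ≤ i < j ≤ n} α_i · α_j)^k = k! · Σ_{1 ≤ i_1 < i_2 < ⋯ < i_{2k} ≤ n} α_{i_1} · α_{i_2} ⋯ α_{i_{2k}} in Λ(M). -/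
/-!
Let `e r m` be the sum of the ordered products `α_{i_1} ⋯ α_{i_r}` over increasing `r`-tuples,
`S = Σ α_i`, and `Ω = Σ_{i<j} α_i α_j`. The proof is by induction on `n`, splitting off the first
vector `a = α_0` and writing `'` for the objects built from the remaining vectors.

* `e_{r+1} = e'_{r+1} + a e'_r` (`incSum_succ_succ`), according to whether the tuple starts with `0`.
* `e_{2k} S = e_{2k+1}` (`incSum_even_mul_sum`): in `(e'_{2k} + a e'_{2k-1}) (a + S')` the term
  `a e'_{2k-1} a` vanishes since `a² = 0`, and `e'_{2k-1} S' = e'_{2k-2} S'²` vanishes since `S'` has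
  degree one.
* `Ω = Ω' + a S'`, where `a S'` commutes with `Ω'` and squares to zero, so that
  `Ω^{k+1} = Ω'^{k+1} + (k+1) Ω'^k a S'`. By induction this is
  `(k+1)! (e'_{2k+2} + a e'_{2k} S') = (k+1)! (e'_{2k+2} + a e'_{2k+1}) = (k+1)! e_{2k+2}`.
-/

namespace PowSumPairs

open ExteriorAlgebra Finset

section Tuples

variable {n r : ℕ}

lemma strictMono_cons_zero {g : Fin r → Fin n} (hg : StrictMono g) :
    StrictMono (Fin.cons 0 (Fin.succ ∘ g) : Fin (r + 1) → Fin (n + 1)) := by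
  intro i j hij
  induction j using Fin.cases with
  | zero => exact absurd hij (Fin.not_lt_zero i)
  | succ j =>
    induction i using Fin.cases with
    | zero => simp
    | succ i => simpa using hg (Fin.succ_lt_succ_iff.1 hij)

lemma exists_succ_comp {f : Fin r → Fin (n + 1)} (hf : StrictMono f) (h0 : ∀ i, f i ≠ 0) :
    ∃ g : Fin r → Fin n, StrictMono g ∧ Fin.succ ∘ g = f := by
  refine ⟨fun i => (f i).pred (h0 i), fun i j hij => ?_, ?_⟩
  · simpa using hf hij
  · ext i; simp

open Classical in
/-- An increasing tuple in `Fin (n + 1)` either avoids `0`, or starts with `0` and avoids it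
afterwards. -/
lemma sum_strictMono_succ {A : Type*} [AddCommMonoid A]
    (F : (Fin (r + 1) → Fin (n + 1)) → A) :
    (∑ f : Fin (r + 1) → Fin (n + 1), if StrictMono f then F f else 0)
      = (∑ g : Fin (r + 1) → Fin n, if StrictMono g then F (Fin.succ ∘ g) else 0)
        + ∑ g : Fin r → Fin n, if StrictMono g then F (Fin.cons 0 (Fin.succ ∘ g)) else 0 := by
  simp only [← Finset.sum_filter]
  rw [← Finset.sum_filter_add_sum_filter_not (univ.filter StrictMono) (fun f => f 0 ≠ 0) F]
  congr 1
  · symm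
    refine Finset.sum_bij (fun g _ => Fin.succ ∘ g) ?_ ?_ ?_ ?_
    · intro g hg
      simp only [mem_filter, mem_univ, true_and] at hg ⊢
      exact ⟨(Fin.strictMono_succ).comp hg, by simp⟩
    · intro g _ g' _ h
      exact (Fin.succ_injective n).comp_left h
    · intro f hf
      simp only [mem_filter, mem_univ, true_and] at hf
      obtain ⟨g, hg, rfl⟩ := exists_succ_comp hf.1 fun i h =>
        hf.2 (le_antisymm (h ▸ hf.1.monotone (Fin.zero_le i)) (Fin.zero_le _))
      exact ⟨g, by simpa using hg, rfl⟩
    · intro g _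
      rfl
  · symm
    refine Finset.sum_bij (fun g _ => Fin.cons 0 (Fin.succ ∘ g)) ?_ ?_ ?_ ?_
    · intro g hg
      simp only [mem_filter, mem_univ, true_and] at hg ⊢
      exact ⟨strictMono_cons_zero hg, by simp⟩
    · intro g _ g' _ h
      exact (Fin.succ_injective n).comp_left (Fin.cons_right_injective _ h)
    · intro f hf
      simp only [mem_filter, mem_univ, true_and, not_not] at hf
      obtain ⟨g, hg, h⟩ := exists_succ_comp (f := Fin.tail f)
        (fun i j hij => hf.1 (Fin.succ_lt_succ_iff.2 hij)) fun i h => by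
          have := hf.1 (Fin.succ_pos i)
          rw [hf.2] at this
          exact this.ne' h
      refine ⟨g, by simpa using hg, ?_⟩
      rw [h, ← hf.2, Fin.cons_self_tail]
    · intro g _
      rfl

end Tuples

variable {R : Type*} [CommRing R] {M : Type*} [AddCommGroup M] [Module R M] {n : ℕ}

open Classical in
variable (R) in
/-- The sum, over increasing `r`-tuples of indices, of the ordered products of the corresponding
degree-one elements of the exterior algebra. -/
noncomputable def incSum (r : ℕ) (m : Fin n → M) : ExteriorAlgebra R M :=
  ∑ f : Fin r → Fin n,
    if StrictMono f then (List.ofFn fun l : Fin r => ι R (m (f l))).prod else 0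

lemma incSum_zero (m : Fin n → M) : incSum R 0 m = 1 := by
  simp [incSum, Subsingleton.strictMono]

lemma incSum_succ_empty (r : ℕ) (m : Fin 0 → M) : incSum R (r + 1) m = 0 := by
  simp [incSum]

lemma incSum_succ_succ (r : ℕ) (m : Fin (n + 1) → M) :
    incSum R (r + 1) m
      = incSum R (r + 1) (Fin.tail m) + ι R (m 0) * incSum R r (Fin.tail m) := by
  unfold incSum
  rw [sum_strictMono_succ, Finset.mul_sum]
  simp [List.ofFn_succ, Fin.tail, mul_ite]

lemma ι_mul_ι_anticomm (x y : M) : ι R x * ι R y = -(ι R y * ι R x) :=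
  eq_neg_of_add_eq_zero_left (ι_add_mul_swap x y)

lemma incSum_mul_ι (x : M) (r : ℕ) (m : Fin n → M) :
    incSum R r m * ι R x = (-1) ^ r * (ι R x * incSum R r m) := by
  induction n generalizing r with
  | zero => cases r <;> simp [incSum_zero, incSum_succ_empty]
  | succ n ih =>
    cases r with
    | zero => simp [incSum_zero]
    | succ r =>
      rw [incSum_succ_succ, add_mul, mul_assoc, ih, ih, mul_add, mul_add]
      congr 1
      rw [← mul_assoc (ι R x), ι_mul_ι_anticomm x, pow_succ]
      rcases neg_one_pow_eq_or (ExteriorAlgebra R M) r with h | h <;> simp [h, mul_assoc]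

lemma commute_incSum_even (x : M) (k : ℕ) (m : Fin n → M) :
    Commute (incSum R (2 * k) m) (ι R x) :=
  show _ * _ = _ * _ by simpa [pow_mul] using incSum_mul_ι (R := R) x (2 * k) m

/-- A sum of degree-one elements has degree one, hence squares to zero. -/
lemma sum_ι_mul_self (m : Fin n → M) : (∑ i, ι R (m i)) * ∑ i, ι R (m i) = 0 := by
  rw [← map_sum, ι_sq_zero]

lemma incSum_even_mul_sum (k : ℕ) (m : Fin n → M) :
    incSum R (2 * k) m * ∑ i, ι R (m i) = incSum R (2 * k + 1) m := by
  induction n generalizing k with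
  | zero => simp [incSum_succ_empty]
  | succ n ih =>
    have hS : ∑ i, ι R (m i) = ι R (m 0) + ∑ i, ι R (Fin.tail m i) := Fin.sum_univ_succ _
    rw [incSum_succ_succ, hS, ← ih]
    cases k with
    | zero => simp [incSum_zero, add_comm]
    | succ k =>
      have hodd : incSum R (2 * k + 1) (Fin.tail m) * ∑ i, ι R (Fin.tail m i) = 0 := by
        rw [← ih, mul_assoc, sum_ι_mul_self, mul_zero]
      have haa : ι R (m 0) * incSum R (2 * k + 1) (Fin.tail m) * ι R (m 0) = 0 := by
        rw [mul_assoc, incSum_mul_ι]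
        rcases neg_one_pow_eq_or (ExteriorAlgebra R M) (2 * k + 1) with h | h <;>
          simp [h, ← mul_assoc]
      have hc := (commute_incSum_even (R := R) (m 0) (k + 1) (Fin.tail m)).eq
      have h1 : incSum R (2 * (k + 1)) m = incSum R (2 * (k + 1)) (Fin.tail m)
          + ι R (m 0) * incSum R (2 * k + 1) (Fin.tail m) := incSum_succ_succ (2 * k + 1) m
      rw [h1, add_mul, mul_add (incSum R _ (Fin.tail m)), mul_add (ι R (m 0) * _), haa, mul_assoc (ι R (m 0)), hodd, hc]
      simp [add_comm]

variable (R) in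
/-- The degree-two element `Σ_{i<j} α_i α_j`. -/
noncomputable def pairSum (m : Fin n → M) : ExteriorAlgebra R M :=
  ∑ i : Fin n, ∑ j ∈ Finset.Ioi i, ι R (m i) * ι R (m j)

lemma pairSum_succ (m : Fin (n + 1) → M) :
    pairSum R m = pairSum R (Fin.tail m) + ι R (m 0) * ∑ i, ι R (Fin.tail m i) := by
  simp only [pairSum, Fin.sum_univ_succ, Fin.sum_Ioi_zero, Fin.sum_Ioi_succ, Fin.tail,
    Finset.mul_sum]
  exact add_comm _ _

lemma commute_pairSum (x : M) (m : Fin n → M) : Commute (pairSum R m) (ι R x) := by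
  refine Commute.sum_left _ _ _ fun i _ => Commute.sum_left _ _ _ fun j _ => ?_
  change _ * _ * _ = _ * (_ * _)
  rw [mul_assoc, ι_mul_ι_anticomm (m j), mul_neg, ← mul_assoc, ι_mul_ι_anticomm (m i) x]
  simp [mul_assoc]

/-- First-order binomial expansion for a commuting increment of square zero. -/
lemma add_pow_succ_of_mul_self {A : Type*} [Ring A] {X Y : A} (h : Commute X Y)
    (hY : Y * Y = 0) (k : ℕ) :
    (X + Y) ^ (k + 1) = X ^ (k + 1) + (k + 1) • (X ^ k * Y) := by
  induction k with
  | zero => simp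
  | succ k ih =>
    have h1 : X ^ k * Y * X = X ^ (k + 1) * Y := by
      rw [mul_assoc, ← h.eq, ← mul_assoc, pow_succ]
    have h2 : X ^ k * Y * Y = 0 := by rw [mul_assoc, hY, mul_zero]
    rw [pow_succ (X + Y), ih, add_mul, mul_add, smul_mul_assoc, mul_add, h1, h2,
      ← pow_succ, add_zero, add_assoc, succ_nsmul' _ (k + 1)]

theorem pairSum_pow (m : Fin n → M) (k : ℕ) :
    pairSum R m ^ k = k.factorial • incSum R (2 * k) m := by
  induction n generalizing k with
  | zero =>
    cases k with
    | zero => simp [incSum_zero]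
    | succ k => simp [pairSum, mul_add, incSum_succ_empty]
  | succ n ih =>
    cases k with
    | zero => simp [incSum_zero]
    | succ k =>
      set a := ι R (m 0) with ha
      set S := ∑ i, ι R (Fin.tail m i) with hS
      have hSι : S = ι R (∑ i, Fin.tail m i) := by rw [hS, map_sum]
      have hcomm : Commute (pairSum R (Fin.tail m)) (a * S) :=
        (commute_pairSum _ _).mul_right (hSι ▸ commute_pairSum _ _)
      have hsq : a * S * (a * S) = 0 := by
        have h : S * a = -(a * S) := by rw [hSι]; exact ι_mul_ι_anticomm _ _
        rw [mul_assoc, ← mul_assoc S, h, neg_mul, mul_assoc, sum_ι_mul_self]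
        simp
      have hmul : incSum R (2 * k) (Fin.tail m) * (a * S)
          = a * incSum R (2 * k + 1) (Fin.tail m) := by
        rw [← mul_assoc, (commute_incSum_even _ _ _).eq, mul_assoc, incSum_even_mul_sum]
      have hrec : incSum R (2 * (k + 1)) m = incSum R (2 * (k + 1)) (Fin.tail m)
          + a * incSum R (2 * k + 1) (Fin.tail m) := incSum_succ_succ (2 * k + 1) m
      rw [pairSum_succ, add_pow_succ_of_mul_self hcomm hsq, ih, ih, smul_mul_assoc, hmul, hrec,
        smul_add, smul_smul, Nat.factorial_succ]

end PowSumPairs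

open Classical in
/-- In the exterior algebra of a module `M` over a commutative ring `R`, for
degree-one elements `α_1, …, α_n`, the `k`-th power of `Σ_{i<j} α_i α_j` equals
`k!` times the sum over increasing `2k`-tuples `i_1 < ⋯ < i_{2k}` of the ordered
products `α_{i_1} ⋯ α_{i_{2k}}`. -/
theorem pow_sum_pairs_exteriorAlgebra (R : Type*) [CommRing R] (M : Type*)
    [AddCommGroup M] [Module R M] (n : ℕ) (m : Fin n → M) (k : ℕ) :
    (∑ i : Fin n, ∑ j ∈ Finset.Ioi i,
        ExteriorAlgebra.ι R (m i) * ExteriorAlgebra.ι R (m j)) ^ k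
      = Nat.factorial k •
          ∑ f : Fin (2 * k) → Fin n,
            if StrictMono f then
              (List.ofFn fun l : Fin (2 * k) => ExteriorAlgebra.ι R (m (f l))).prod
            else 0 := by
  exact PowSumPairs.pairSum_pow m k
end
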